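/- arXiv:2408.04384 — 7 statements merged into one kernel-verified Lean document; each statement's English description precedes it below -/
import Mathlib

section
/- Let U be a domain in ℂ^d (a nonempty open connected subset of EuclideanSpace ℂ (Fin d)), let g be holomorphic on U, and let f : ℂ^d → ℂ be a nonzero affine-linear function, i.e. f(z) = l(z) + c for some ℂ-linear functional l and constant c ∈ ℂ with f not identically zero. If every zero of f lying in U is a zero of g (i.e. for all z ∈ U, f(z) = 0 implies g(z) = 0), then g/f extends holomorphically to U: there exists a function h holomorphic on U such that g(z) = f(z)·h(z) for all z ∈ U. -/
/-!
If `l = 0`, then `f` is a nonzero constant and `h = g / c` works. Otherwise fix `v` with `l v = 1`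
and set `h = g / f` off the hyperplane `f = 0` and `h = ∂g/∂v` on it. At a point `w ∈ U` of the
hyperplane, `s ↦ h (w + s v)` is the divided slope at `0` of `s ↦ g (w + s v)`, which is
holomorphic by the one-variable removable singularity theorem.

It remains to see that `h`, holomorphic off the hyperplane and along the transversal direction `v`,
is holomorphic near each `z₀` of the hyperplane (`differentiableAt_of_transversal`). The mean value
property along `v` writes `h w`, for `w` near `z₀`, as the average of `h` over the circle
`{w + s v : |s| = r}`. For `w = z₀` this circle is a compact set that misses the hyperplane, so
near it the derivative of `h` is bounded by the Schwarz lemma, and one may differentiate under the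
integral sign.
-/

open Metric Set Filter Topology MeasureTheory

/-- The derivative of a holomorphic function on an open set `W` is bounded on a neighbourhood of
any compact subset of `W`. -/
lemma exists_fderiv_bound {E : Type*} [NormedAddCommGroup E] [NormedSpace ℂ E]
    [FiniteDimensional ℂ E] {W K : Set E} (hW : IsOpen W) (hK : IsCompact K) (hKW : K ⊆ W)
    {h : E → ℂ} (hd : DifferentiableOn ℂ h W) :
    ∃ δ > 0, thickening δ K ⊆ W ∧ ∃ C, ∀ y ∈ thickening δ K, ‖fderiv ℂ h y‖ ≤ C := by
  have : ProperSpace E := FiniteDimensional.proper ℂ E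
  obtain ⟨ε, hε, hsub⟩ := hK.exists_cthickening_subset_open hW hKW
  obtain ⟨M, hM⟩ := (hK.cthickening (r := ε)).exists_bound_of_continuousOn
    (hd.continuousOn.mono hsub)
  have hball : ∀ y ∈ thickening (ε / 2) K, ball y (ε / 2) ⊆ cthickening ε K := by
    intro y hy x hx
    obtain ⟨k, hk, hyk⟩ := mem_thickening_iff.1 hy
    refine mem_cthickening_of_dist_le x k ε K hk ?_
    have h1 := dist_triangle x y k
    have h2 := mem_ball.1 hx
    linarith
  have hself : ∀ y ∈ thickening (ε / 2) K, y ∈ cthickening ε K := fun y hy =>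
    hball y hy (mem_ball_self (by positivity))
  refine ⟨ε / 2, by positivity, fun y hy => hsub (hself y hy), 2 * M / (ε / 2), fun y hy => ?_⟩
  refine Complex.norm_fderiv_le_div_of_mapsTo_ball (hd.mono ((hball y hy).trans hsub)) ?_
    (by positivity)
  intro x hx
  rw [mem_closedBall, dist_eq_norm]
  have h1 := norm_sub_le (h x) (h y)
  have h2 := hM x (hball y hy hx)
  have h3 := hM y (hself y hy)
  linarith

/-- A function holomorphic off the affine hyperplane `L z + c = 0`, and holomorphic at each point
of the hyperplane along one transversal direction `v`, is holomorphic. -/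
lemma differentiableAt_of_transversal {E : Type*} [NormedAddCommGroup E] [NormedSpace ℂ E]
    [FiniteDimensional ℂ E] {U : Set E} (hU : IsOpen U) (L : E →L[ℂ] ℂ) (c : ℂ) {v : E}
    (hv : L v = 1) {h : E → ℂ} (hd : DifferentiableOn ℂ h (U ∩ {z | L z + c ≠ 0}))
    (hline : ∀ w ∈ U, L w + c = 0 → DifferentiableAt ℂ (fun s : ℂ => h (w + s • v)) 0)
    {z₀ : E} (hz₀ : z₀ ∈ U) (hLz : L z₀ + c = 0) : DifferentiableAt ℂ h z₀ := by
  borelize E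
  have hW : IsOpen (U ∩ {z | L z + c ≠ 0}) :=
    hU.inter (isOpen_ne_fun (by fun_prop) (by fun_prop))
  have hdiff : ∀ w, (w ∈ U) → DifferentiableAt ℂ (fun s : ℂ => h (w + s • v)) 0 := by
    intro w hw
    by_cases hwL : L w + c = 0
    · exact hline w hw hwL
    · have h1 : DifferentiableAt ℂ h (w + (0 : ℂ) • v) := by
        simpa using hd.differentiableAt (hW.mem_nhds ⟨hw, hwL⟩)
      exact h1.comp (0 : ℂ) (f := fun s : ℂ => w + s • v) (by fun_prop)
  obtain ⟨ε, hε, hεU⟩ := Metric.isOpen_iff.1 hU z₀ hz₀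
  set r : ℝ := ε / (2 * (‖v‖ + 1)) with hr
  have hr0 : 0 < r := by positivity
  have hrv : r * ‖v‖ < ε / 2 := by
    have : r * (‖v‖ + 1) = ε / 2 := by rw [hr]; field_simp
    nlinarith
  -- The discs `w + s v`, `|s| ≤ r`, lie in `U` for `w` close to `z₀`.
  have hdisc : ∀ w ∈ ball z₀ (ε / 2), ∀ s : ℂ, ‖s‖ ≤ r → w + s • v ∈ U := by
    intro w hw s hs
    apply hεU
    rw [mem_ball, dist_eq_norm] at hw ⊢
    have h1 : w + s • v - z₀ = (w - z₀) + s • v := by abel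
    have h2 := norm_add_le (w - z₀) (s • v)
    have h3 : ‖s • v‖ ≤ r * ‖v‖ := by
      rw [norm_smul]; gcongr
    rw [h1]; linarith
  have hmean : ∀ w ∈ ball z₀ (ε / 2),
      Real.circleAverage (fun s : ℂ => h (w + s • v)) 0 r = h w := by
    intro w hw
    have hdd : DifferentiableOn ℂ (fun s : ℂ => h (w + s • v)) (closedBall 0 |r|) := by
      intro s hs
      rw [mem_closedBall_zero_iff, abs_of_pos hr0] at hs
      have h1 := hdiff _ (hdisc w hw s hs)
      have h2 : DifferentiableAt ℂ (fun t : ℂ => h (w + s • v + t • v)) (s - s) := by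
        simpa using h1
      have h3 := h2.comp s (f := fun t : ℂ => t - s) (by fun_prop)
      have h4 : (fun t : ℂ => h (w + t • v)) =
          (fun t : ℂ => h (w + s • v + t • v)) ∘ (fun t : ℂ => t - s) := by
        funext t
        simp only [Function.comp]
        congr 1
        module
      rw [h4]
      exact h3.differentiableWithinAt
    have := DiffContOnCl.circleAverage
      (f := fun s : ℂ => h (w + s • v)) (c := 0) (R := r)
      ((hdd.mono closure_ball_subset_closedBall).diffContOnCl)
    simpa using this
  have hγ : Continuous fun θ : ℝ => circleMap 0 r θ := continuous_circleMap 0 r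
  have hnorm : ∀ θ : ℝ, ‖circleMap 0 r θ‖ = r := fun θ => by
    simp [abs_of_pos hr0]
  set K : Set E := (fun s : ℂ => z₀ + s • v) '' sphere 0 r with hKdef
  have hK : IsCompact K := (isCompact_sphere 0 r).image (by fun_prop)
  have hKW : K ⊆ U ∩ {z | L z + c ≠ 0} := by
    rintro _ ⟨s, hs, rfl⟩
    rw [mem_sphere_zero_iff_norm] at hs
    refine ⟨hdisc z₀ (mem_ball_self (by positivity)) s hs.le, ?_⟩
    have h1 : L (z₀ + s • v) + c = s := by
      simp only [map_add, map_smul, hv, smul_eq_mul, mul_one]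
      linear_combination hLz
    show L (z₀ + s • v) + c ≠ 0
    rw [h1, ← norm_pos_iff, hs]
    exact hr0
  obtain ⟨δ, hδ, hδW, C, hC⟩ := exists_fderiv_bound hW hK hKW hd
  have hmem : ∀ w ∈ ball z₀ δ, ∀ θ : ℝ, w + circleMap 0 r θ • v ∈ thickening δ K := by
    intro w hw θ
    refine mem_thickening_iff.2 ⟨z₀ + circleMap 0 r θ • v, ⟨_, ?_, rfl⟩, by simpa using hw⟩
    rw [mem_sphere_zero_iff_norm, hnorm]
  have hcont : ∀ w ∈ ball z₀ δ, Continuous fun θ : ℝ => h (w + circleMap 0 r θ • v) := by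
    intro w hw
    exact hd.continuousOn.comp_continuous (by fun_prop) fun θ => hδW (hmem w hw θ)
  have hint : HasFDerivAt
      (fun w => ∫ θ in (0 : ℝ)..2 * Real.pi, h (w + circleMap 0 r θ • v))
      (∫ θ in (0 : ℝ)..2 * Real.pi, fderiv ℂ h (z₀ + circleMap 0 r θ • v)) z₀ := by
    refine intervalIntegral.hasFDerivAt_integral_of_dominated_of_fderiv_le
      (F := fun w θ => h (w + circleMap 0 r θ • v))
      (F' := fun w θ => fderiv ℂ h (w + circleMap 0 r θ • v))
      (bound := fun _ => C) (ball_mem_nhds z₀ hδ) ?_ ?_ ?_ ?_ ?_ ?_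
    · filter_upwards [ball_mem_nhds z₀ hδ] with w hw
      exact (hcont w hw).aestronglyMeasurable
    · exact (hcont z₀ (mem_ball_self hδ)).intervalIntegrable _ _
    · have hm : Measurable fun θ : ℝ => fderiv ℂ h (z₀ + circleMap 0 r θ • v) :=
        (measurable_fderiv ℂ h).comp
          (Continuous.measurable (f := fun θ : ℝ => z₀ + circleMap 0 r θ • v) (by fun_prop))
      have : SecondCountableTopology (E →L[ℂ] ℂ) :=
        have := FiniteDimensional.proper ℂ (E →L[ℂ] ℂ)
        inferInstance
      exact hm.aestronglyMeasurable
    · exact Eventually.of_forall fun θ _ w hw => hC _ (hmem w hw θ)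
    · exact intervalIntegrable_const
    · refine Eventually.of_forall fun θ _ w hw => ?_
      have h1 := (hd.differentiableAt (hW.mem_nhds (hδW (hmem w hw θ)))).hasFDerivAt
      exact (hasFDerivAt_comp_add_right (circleMap 0 r θ • v)).2 h1
  have hfin := hint.differentiableAt.const_smul ((2 * Real.pi)⁻¹ : ℝ)
  refine hfin.congr_of_eventuallyEq ?_
  filter_upwards [ball_mem_nhds z₀ (half_pos hε)] with w hw
  rw [← hmean w hw]
  rfl

/-- If `g` is holomorphic on a domain `U ⊆ ℂ^d`, `f` is a nonzero
affine-linear function whose zeros in `U` are zeros of `g`, then `g / f` extends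
holomorphically to `U`. -/
theorem stmt_0 (d : ℕ) (hd : 1 ≤ d)
    (U : Set (EuclideanSpace ℂ (Fin d)))
    (hUopen : IsOpen U) (hUconn : IsConnected U)
    (g : EuclideanSpace ℂ (Fin d) → ℂ) (hg : DifferentiableOn ℂ g U)
    (f : EuclideanSpace ℂ (Fin d) → ℂ)
    (l : EuclideanSpace ℂ (Fin d) →ₗ[ℂ] ℂ) (c : ℂ)
    (hf : ∀ z, f z = l z + c)
    (hfne : ∃ z, f z ≠ 0)
    (hzg : ∀ z ∈ U, f z = 0 → g z = 0) :
    ∃ h : EuclideanSpace ℂ (Fin d) → ℂ,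
      DifferentiableOn ℂ h U ∧ ∀ z ∈ U, g z = f z * h z := by
  by_cases hl : l = 0
  · obtain ⟨z, hz⟩ := hfne
    have hc : c ≠ 0 := by simpa [hf, hl] using hz
    refine ⟨fun z => g z * c⁻¹, hg.mul_const c⁻¹, fun z _ => ?_⟩
    simp only [hf, hl, LinearMap.zero_apply, zero_add]
    field_simp
  obtain ⟨u, hu⟩ : ∃ u, l u ≠ 0 := by
    by_contra! hcon
    exact hl (LinearMap.ext hcon)
  set L := LinearMap.toContinuousLinearMap l with hL
  have hfL : ∀ z, f z = L z + c := hf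
  set v := (l u)⁻¹ • u with hvdef
  have hv : L v = 1 := by
    change l v = 1
    simp [hvdef, hu]
  have hfv : ∀ w (s : ℂ), f (w + s • v) = f w + s := by
    intro w s
    simp only [hfL, map_add, map_smul, hv, smul_eq_mul, mul_one]
    ring
  classical
  let h : EuclideanSpace ℂ (Fin d) → ℂ := fun z =>
    if f z = 0 then deriv (fun s : ℂ => g (z + s • v)) 0 else g z / f z
  have hfd : Differentiable ℂ f := by
    rw [funext hfL]; fun_prop
  have hW : IsOpen (U ∩ {z | L z + c ≠ 0}) :=
    hUopen.inter (isOpen_ne_fun (by fun_prop) (by fun_prop))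
  have hoff : DifferentiableOn ℂ h (U ∩ {z | L z + c ≠ 0}) := by
    have hne : ∀ z ∈ U ∩ {z | L z + c ≠ 0}, f z ≠ 0 := fun z hz => by
      rw [hfL]; exact hz.2
    refine ((hg.mono inter_subset_left).mul
      (hfd.differentiableOn.fun_inv hne)).congr fun z hz => ?_
    simp [h, hne z hz, div_eq_mul_inv]
  refine ⟨h, fun z hz => ?_, fun z hz => ?_⟩
  · refine DifferentiableAt.differentiableWithinAt ?_
    by_cases hfz : L z + c = 0
    · refine differentiableAt_of_transversal hUopen L c hv hoff ?_ hz hfz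
      intro w hw hwL
      have hfw : f w = 0 := by rw [hfL, hwL]
      have heq : (fun s : ℂ => h (w + s • v)) = dslope (fun s : ℂ => g (w + s • v)) 0 := by
        funext s
        by_cases hs : s = 0
        · simp [hs, h, hfw, dslope_same]
        · simp [h, hfv, hfw, hs, dslope_of_ne, slope_def_field, hzg w hw hfw]
      have hline : Continuous fun s : ℂ => w + s • v := by fun_prop
      have hV : (fun s : ℂ => w + s • v) ⁻¹' U ∈ 𝓝 (0 : ℂ) :=
        (hUopen.preimage hline).mem_nhds (by simpa using hw)
      rw [heq]
      refine DifferentiableOn.differentiableAt ((Complex.differentiableOn_dslope hV).2 ?_) hV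
      exact hg.comp (by fun_prop) fun s hs => hs
    · exact hoff.differentiableAt (hW.mem_nhds ⟨hz, hfz⟩)
  · by_cases hfz : f z = 0
    · rw [hfz, zero_mul, hzg z hz hfz]
    · simp only [h, if_neg hfz]
      field_simp
end

section
/- Let U, V be domains in ℂ^d and let φ : U → V be a holomorphic 2-proper map. Suppose σ₁, σ₂ : U → U are holomorphic involutions (σⱼ∘σⱼ = id on U) such that for j = 1, 2: σⱼ is not the identity map of U, φ(σⱼ(z)) = φ(z) for all z ∈ U, and the fixed-point set {z ∈ U : σⱼ(z) = z} equals the zero set Z(J_φ) = {z ∈ U : J_φ(z) = 0}. Then σ₁ = σ₂ on U. -/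
/-!
Both involutions preserve each fiber of `φ`, so the theorem holds fiber by fiber. In a one-point
fiber there is only one possible value. A two-point fiber lies off `Z(J_φ)`, the common fixed-point
set, so each involution sends `z` to the other point of its fiber.
-/

/-- Uniqueness of the holomorphic involution associated with a
holomorphic 2-proper map `φ : U → V`. -/
theorem stmt_1 (d : ℕ) (hd : 1 ≤ d)
    (U V : Set (EuclideanSpace ℂ (Fin d)))
    (hUopen : IsOpen U) (hUconn : IsConnected U)
    (hVopen : IsOpen V) (hVconn : IsConnected V)
    (φ : EuclideanSpace ℂ (Fin d) → EuclideanSpace ℂ (Fin d))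
    (hφholo : DifferentiableOn ℂ φ U)
    (hφmaps : Set.MapsTo φ U V)
    (hφsurj : φ '' U = V)
    (hφproper : ∀ K : Set (EuclideanSpace ℂ (Fin d)), K ⊆ V → IsCompact K →
      IsCompact {z ∈ U | φ z ∈ K})
    (hfib2 : ∀ v ∈ V \ (φ '' {z ∈ U | (fderiv ℂ φ z).det = 0}),
      Nat.card {z ∈ U | φ z = v} = 2)
    (hfib1 : ∀ v ∈ φ '' {z ∈ U | (fderiv ℂ φ z).det = 0},
      Nat.card {z ∈ U | φ z = v} = 1)
    (σ₁ σ₂ : EuclideanSpace ℂ (Fin d) → EuclideanSpace ℂ (Fin d))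
    (hσ₁maps : Set.MapsTo σ₁ U U) (hσ₂maps : Set.MapsTo σ₂ U U)
    (hσ₁holo : DifferentiableOn ℂ σ₁ U) (hσ₂holo : DifferentiableOn ℂ σ₂ U)
    (hσ₁inv : ∀ z ∈ U, σ₁ (σ₁ z) = z) (hσ₂inv : ∀ z ∈ U, σ₂ (σ₂ z) = z)
    (hσ₁ne : ¬ (∀ z ∈ U, σ₁ z = z)) (hσ₂ne : ¬ (∀ z ∈ U, σ₂ z = z))
    (hσ₁φ : ∀ z ∈ U, φ (σ₁ z) = φ z) (hσ₂φ : ∀ z ∈ U, φ (σ₂ z) = φ z)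
    (hσ₁fix : {z ∈ U | σ₁ z = z} = {z ∈ U | (fderiv ℂ φ z).det = 0})
    (hσ₂fix : {z ∈ U | σ₂ z = z} = {z ∈ U | (fderiv ℂ φ z).det = 0}) :
    Set.EqOn σ₁ σ₂ U := by
  intro z hz
  have hσ₁mem : σ₁ z ∈ {w ∈ U | φ w = φ z} := ⟨hσ₁maps hz, hσ₁φ z hz⟩
  have hσ₂mem : σ₂ z ∈ {w ∈ U | φ w = φ z} := ⟨hσ₂maps hz, hσ₂φ z hz⟩
  by_cases hv : φ z ∈ φ '' {w ∈ U | (fderiv ℂ φ w).det = 0}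
  · -- The fiber through `z` is a singleton containing both `σ₁ z` and `σ₂ z`.
    have hsub := (Nat.card_eq_one_iff_unique.mp (hfib1 _ hv)).1
    exact congrArg Subtype.val (hsub.elim ⟨_, hσ₁mem⟩ ⟨_, hσ₂mem⟩)
  · -- Here `J_φ z ≠ 0`, so neither involution fixes `z`; both map it to the other point
    -- of its two-point fiber.
    have hz0 : z ∉ {w ∈ U | (fderiv ℂ φ w).det = 0} := fun h => hv ⟨z, h, rfl⟩
    have hσ₁z : σ₁ z ≠ z := fun h => hz0 (hσ₁fix ▸ (⟨hz, h⟩ : z ∈ {w ∈ U | σ₁ w = w}))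
    have hσ₂z : σ₂ z ≠ z := fun h => hz0 (hσ₂fix ▸ (⟨hz, h⟩ : z ∈ {w ∈ U | σ₂ w = w}))
    have hcard : Set.ncard {w ∈ U | φ w = φ z} = 2 := hfib2 _ ⟨hφmaps hz, hv⟩
    obtain ⟨a, b, -, hab⟩ := Set.ncard_eq_two.mp hcard
    have hzmem : z ∈ {w ∈ U | φ w = φ z} := ⟨hz, rfl⟩
    rw [hab] at hσ₁mem hσ₂mem hzmem
    simp only [Set.mem_insert_iff, Set.mem_singleton_iff] at hσ₁mem hσ₂mem hzmem
    grind
end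

section
/- Let U, V be domains in ℂ^d and let φ : U → V be an admissible proper holomorphic map: φ is proper, holomorphic on U, surjective onto V, and the fiber {x ∈ U : φ(x) = v} is a singleton for every v ∈ φ(Z(J_φ)). Let h be holomorphic on U and constant on the fibers of φ (i.e. for all x, y ∈ U, φ(x) = φ(y) implies h(x) = h(y)). Then there exists a function f holomorphic on V such that h(z) = f(φ(z)) for all z ∈ U. -/
/-!
The function `f` on `V` with `f ∘ φ = h` exists because `h` is constant on fibers. It is continuous,
since a proper surjection is a quotient map, and it is holomorphic off the set `S` of critical
values, where `φ` has holomorphic local sections (`exists_local_section`). The point is to remove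
the singularity `S`, without using that `S` is an analytic set.

By Osgood's lemma (`differentiableOn_of_lineDifferentiable`) it is enough to show that `f` is
holomorphic along complex lines. By Sard's lemma `S` is Lebesgue null, so by Fubini almost every
line in a given direction meets `S` in a set with dense complement (`dense_setOf_dense_slice`), and
by continuity of `f` only these lines need be treated.

On a closed disc in such a line the maximum principle holds for every `F` that is continuous and is
holomorphic off `S`: on the compact preimage of the disc under `φ`, the function
`‖F‖ ^ n * ‖J_φ‖` attains its maximum over the boundary circle, as `J_φ` vanishes at every preimage
of `S` (this uses admissibility) and local sections exist elsewhere. Letting `n → ∞` gives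
`‖F‖ ≤ max ‖F‖` over the circle (`norm_le_of_weight`). As in Radó's theorem, this maximum principle
forces the real and imaginary parts of `f` to be harmonic on the disc, and then `f` to be
holomorphic (`rado`).
-/

open Metric Set Filter Topology

/-! ### Holomorphy in several variables -/

section SeveralVariables

variable {E F : Type*} [NormedAddCommGroup E] [NormedSpace ℂ E]
  [NormedAddCommGroup F] [NormedSpace ℂ F]

/-- First order Taylor estimate: the Schwarz lemma applied to `t ↦ g t - t • g' 0`. -/
lemma norm_taylor_one_le {g : ℂ → F} {R M : ℝ} (hR : 0 < R)
    (hg : DifferentiableOn ℂ g (ball 0 R)) (hM : ∀ t ∈ ball (0 : ℂ) R, ‖g t‖ ≤ M)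
    {t : ℂ} (ht : t ∈ ball (0 : ℂ) R) :
    ‖g t - g 0 - t • deriv g 0‖ ≤ 4 * M * (‖t‖ / R) ^ 2 := by
  have h0 : (0 : ℂ) ∈ ball (0 : ℂ) R := mem_ball_self hR
  have hmaps : MapsTo g (ball 0 R) (closedBall (g 0) (2 * M)) := by
    intro s hs
    rw [mem_closedBall, dist_eq_norm]
    linarith [norm_sub_le (g s) (g 0), hM s hs, hM 0 h0]
  have hd : ‖deriv g 0‖ ≤ 2 * M / R := Complex.norm_deriv_le_div_of_mapsTo_ball hg hmaps hR
  have hda : DifferentiableAt ℂ g 0 := hg.differentiableAt (isOpen_ball.mem_nhds h0)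
  have key := Complex.dist_le_mul_div_pow_of_mapsTo_ball_of_isLittleO
    (f := fun s => g s - s • deriv g 0) (c := 0) (z := t) (R₁ := R) (R₂ := 4 * M) (n := 1)
    (by fun_prop) ?_ ?_ ht
  · simp only [dist_eq_norm, zero_smul, sub_zero] at key
    rwa [sub_right_comm]
  · intro s hs
    rw [mem_closedBall, dist_eq_norm]
    have h1 : ‖s • deriv g 0‖ ≤ 2 * M := by
      rw [norm_smul]
      have : ‖s‖ ≤ R := (mem_ball_zero_iff.1 hs).le
      calc ‖s‖ * ‖deriv g 0‖ ≤ R * (2 * M / R) := by gcongr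
        _ = 2 * M := by field_simp
    have h2 := hmaps hs
    rw [mem_closedBall, dist_eq_norm] at h2
    have : g s - s • deriv g 0 - (g 0 - (0 : ℂ) • deriv g 0) = (g s - g 0) - s • deriv g 0 := by
      simp [sub_right_comm]
    rw [this]
    linarith [norm_sub_le (g s - g 0) (s • deriv g 0)]
  · have := hda.hasDerivAt.isLittleO
    refine (this.congr_left ?_).trans_isBigO ?_
    · intro s; simp [sub_right_comm]
    · simpa using (Asymptotics.isBigO_refl (fun s : ℂ => s - 0) (𝓝 0)).norm_right

/-- A continuous function that is holomorphic along complex lines satisfies a first order Taylor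
estimate with a locally uniform quadratic remainder, by the Schwarz lemma on each line. -/
lemma exists_lineDeriv_taylor {W : Set E} (hW : IsOpen W) {f : E → F} (hf : ContinuousOn f W)
    (hl : ∀ z ∈ W, ∀ w, LineDifferentiableAt ℂ f z w) {z₀ : E} (hz₀ : z₀ ∈ W) :
    ∃ δ > 0, ∃ C : ℝ, ∀ z ∈ ball z₀ δ, ∀ w : E, ‖w‖ < δ →
      z + w ∈ W ∧ ‖f (z + w) - f z - lineDeriv ℂ f z w‖ ≤ C * ‖w‖ ^ 2 := by
  have h1 : ∀ᶠ z in 𝓝 z₀, z ∈ W ∧ ‖f z‖ < ‖f z₀‖ + 1 :=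
    (hW.eventually_mem hz₀).and ((hf.continuousAt (hW.mem_nhds hz₀)).norm.eventually_lt
      continuousAt_const (by simp))
  obtain ⟨ε, hε, hball⟩ := Metric.eventually_nhds_iff_ball.1 h1
  refine ⟨ε / 2, by positivity, 4 * (‖f z₀‖ + 1) * (1 / (ε / 2)) ^ 2, fun z hz w hw => ?_⟩
  have hin : ∀ u : E, ‖u‖ < ε / 2 → z + u ∈ ball z₀ ε := by
    intro u hu
    rw [mem_ball, dist_eq_norm] at hz ⊢
    have : z + u - z₀ = (z - z₀) + u := by abel
    rw [this]
    linarith [norm_add_le (z - z₀) u]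
  refine ⟨(hball _ (hin w hw)).1, ?_⟩
  rcases eq_or_ne w 0 with rfl | hw0
  · simp [lineDeriv_zero]
  have hwpos : 0 < ‖w‖ := norm_pos_iff.2 hw0
  have hsm : ∀ t ∈ ball (0 : ℂ) (ε / 2 / ‖w‖), ‖t • w‖ < ε / 2 := by
    intro t ht
    rw [norm_smul]
    exact (lt_div_iff₀ hwpos).1 (mem_ball_zero_iff.1 ht)
  have key := norm_taylor_one_le (g := fun t : ℂ => f (z + t • w)) (R := ε / 2 / ‖w‖)
    (M := ‖f z₀‖ + 1) (t := 1) (by positivity) ?_ ?_ ?_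
  · have e : lineDeriv ℂ f z w = deriv (fun t : ℂ => f (z + t • w)) 0 := rfl
    rw [e]
    simp only [one_smul, zero_smul, add_zero, norm_one] at key
    refine key.trans (le_of_eq ?_)
    field_simp
  · intro t ht
    have h2 := hl _ (hball _ (hin _ (hsm t ht))).1 w
    have h3 : DifferentiableAt ℂ (fun s : ℂ => f (z + t • w + s • w)) (t - t) := by
      simpa [LineDifferentiableAt] using h2
    have h4 : DifferentiableAt ℂ (fun s : ℂ => f (z + t • w + (s - t) • w)) t :=
      DifferentiableAt.comp (g := fun s : ℂ => f (z + t • w + s • w)) (f := fun s : ℂ => s - t)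
        t h3 (by fun_prop)
    refine DifferentiableAt.differentiableWithinAt ?_
    convert h4 using 3 with s
    rw [sub_smul]; abel
  · intro t ht
    exact (hball _ (hin _ (hsm t ht))).2.le
  · rw [mem_ball_zero_iff, norm_one]
    exact (one_lt_div hwpos).2 hw

/-- The difference quotients in the direction `w` converge uniformly near `z₀`. -/
lemma exists_tendstoUniformlyOn_quotient {W : Set E} (hW : IsOpen W) {f : E → F}
    (hf : ContinuousOn f W)
    (hl : ∀ z ∈ W, ∀ w, LineDifferentiableAt ℂ f z w) {z₀ : E} (hz₀ : z₀ ∈ W) (w : E) :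
    ∃ δ > 0, ball z₀ δ ⊆ W ∧
      (∀ᶠ t : ℂ in 𝓝[≠] 0, ∀ z ∈ ball z₀ δ, z + t • w ∈ W) ∧
      TendstoUniformlyOn (fun (t : ℂ) (z : E) => t⁻¹ • (f (z + t • w) - f z))
        (fun z => lineDeriv ℂ f z w) (𝓝[≠] 0) (ball z₀ δ) := by
  obtain ⟨δ, hδ, C, hC⟩ := exists_lineDeriv_taylor hW hf hl hz₀
  have hsmall : ∀ᶠ t : ℂ in 𝓝[≠] 0, ‖t • w‖ < δ := by
    refine nhdsWithin_le_nhds ?_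
    have : ContinuousAt (fun t : ℂ => ‖t • w‖) 0 := by fun_prop
    exact this.eventually_lt continuousAt_const (by simpa using hδ)
  refine ⟨δ, hδ, fun z hz => by simpa using (hC z hz 0 (by simpa using hδ)).1,
    hsmall.mono fun t ht z hz => (hC z hz _ ht).1, ?_⟩
  rw [Metric.tendstoUniformlyOn_iff]
  intro ε hε
  have hlim : ∀ᶠ t : ℂ in 𝓝[≠] 0, C * ‖w‖ ^ 2 * ‖t‖ < ε := by
    refine nhdsWithin_le_nhds ?_
    have : ContinuousAt (fun t : ℂ => C * ‖w‖ ^ 2 * ‖t‖) 0 := by fun_prop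
    exact this.eventually_lt continuousAt_const (by simpa using hε)
  filter_upwards [hsmall, hlim, self_mem_nhdsWithin] with t h1 h2 h3 z hz
  have ht : t ≠ 0 := h3
  have h4 := (hC z hz _ h1).2
  rw [dist_comm, dist_eq_norm]
  rw [lineDeriv_smul] at h4
  have e : t⁻¹ • (f (z + t • w) - f z) - lineDeriv ℂ f z w
      = t⁻¹ • (f (z + t • w) - f z - t • lineDeriv ℂ f z w) := by
    rw [smul_sub t⁻¹ (f (z + t • w) - f z), inv_smul_smul₀ ht]
  rw [e, norm_smul, norm_inv]
  refine lt_of_le_of_lt ?_ h2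
  have htp : 0 < ‖t‖ := norm_pos_iff.2 ht
  rw [inv_mul_le_iff₀ htp]
  refine h4.trans (le_of_eq ?_)
  rw [norm_smul]; ring

lemma continuousOn_lineDeriv {W : Set E} (hW : IsOpen W) {f : E → F}
    (hf : ContinuousOn f W)
    (hl : ∀ z ∈ W, ∀ w, LineDifferentiableAt ℂ f z w) (w : E) :
    ContinuousOn (fun z => lineDeriv ℂ f z w) W := by
  intro z₀ hz₀
  obtain ⟨δ, hδ, hsub, hev, hlim⟩ := exists_tendstoUniformlyOn_quotient hW hf hl hz₀ w
  have hc : ContinuousOn (fun z => lineDeriv ℂ f z w) (ball z₀ δ) := by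
    refine hlim.continuousOn (Eventually.frequently ?_)
    filter_upwards [hev] with t ht
    refine ContinuousOn.const_smul (ContinuousOn.sub ?_ (hf.mono hsub)) _
    exact hf.comp (by fun_prop) ht
  exact (hc.continuousAt (ball_mem_nhds _ hδ)).continuousWithinAt

/-- Moving first along `u` and then along `v` computes the derivative along `u + v`, because the
quotients in the direction `v` converge uniformly. -/
lemma lineDeriv_add_of_continuousOn {W : Set E} (hW : IsOpen W) {f : E → F}
    (hf : ContinuousOn f W)
    (hl : ∀ z ∈ W, ∀ w, LineDifferentiableAt ℂ f z w) {z : E} (hz : z ∈ W) (u v : E) :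
    lineDeriv ℂ f z (u + v) = lineDeriv ℂ f z u + lineDeriv ℂ f z v := by
  have hslope : ∀ w, Tendsto (fun t : ℂ => t⁻¹ • (f (z + t • w) - f z)) (𝓝[≠] 0)
      (𝓝 (lineDeriv ℂ f z w)) := by
    intro w
    obtain ⟨δ, hδ, -, -, hlim⟩ := exists_tendstoUniformlyOn_quotient hW hf hl hz w
    exact hlim.tendsto_at (mem_ball_self hδ)
  obtain ⟨δ, hδ, -, -, hlim⟩ := exists_tendstoUniformlyOn_quotient hW hf hl hz v
  have hmove : Tendsto (fun t : ℂ => z + t • u) (𝓝[≠] 0) (𝓝 z) := by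
    have : ContinuousAt (fun t : ℂ => z + t • u) 0 := by fun_prop
    simpa [ContinuousAt] using this.tendsto.mono_left nhdsWithin_le_nhds
  have h1 : Tendsto (fun t : ℂ => t⁻¹ • (f (z + t • u + t • v) - f (z + t • u))) (𝓝[≠] 0)
      (𝓝 (lineDeriv ℂ f z v)) := by
    have hball : ball z δ ∈ 𝓝 z := ball_mem_nhds _ hδ
    have hc : ContinuousWithinAt (fun z => lineDeriv ℂ f z v) (ball z δ) z :=
      ((continuousOn_lineDeriv hW hf hl v).continuousAt (hW.mem_nhds hz)).continuousWithinAt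
    refine tendsto_comp_of_locally_uniform_limit_within
      (F := fun (t : ℂ) (y : E) => t⁻¹ • (f (y + t • v) - f y))
      (f := fun y => lineDeriv ℂ f y v) (x := z) hc
      (tendsto_nhdsWithin_iff.2 ⟨hmove, hmove.eventually hball⟩) ?_
    intro s hs
    exact ⟨ball z δ, self_mem_nhdsWithin, hlim s hs⟩
  refine tendsto_nhds_unique (hslope (u + v)) (((hslope u).add h1).congr fun t => ?_)
  rw [← smul_add]
  congr 1
  rw [smul_add, ← add_assoc]
  abel

/-- **Osgood's lemma**: a continuous function on an open set of a finite dimensional space that is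
holomorphic along every complex line is holomorphic. -/
lemma differentiableOn_of_lineDifferentiable [FiniteDimensional ℂ E] {W : Set E} (hW : IsOpen W)
    {f : E → F} (hf : ContinuousOn f W)
    (hl : ∀ z ∈ W, ∀ w, LineDifferentiableAt ℂ f z w) : DifferentiableOn ℂ f W := by
  intro z hz
  let A : E →ₗ[ℂ] F :=
    { toFun := fun w => lineDeriv ℂ f z w
      map_add' := lineDeriv_add_of_continuousOn hW hf hl hz
      map_smul' := fun c w => lineDeriv_smul }
  obtain ⟨δ, hδ, C, hC⟩ := exists_lineDeriv_taylor hW hf hl hz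
  have hA : HasFDerivAt f (LinearMap.toContinuousLinearMap A) z := by
    rw [hasFDerivAt_iff_isLittleO_nhds_zero]
    have hO : (fun w => f (z + w) - f z - LinearMap.toContinuousLinearMap A w)
        =O[𝓝 0] fun w : E => ‖w‖ ^ 2 := by
      refine Asymptotics.IsBigO.of_bound C ?_
      filter_upwards [ball_mem_nhds (0 : E) hδ] with w hw
      have := (hC z (mem_ball_self hδ) w (mem_ball_zero_iff.1 hw)).2
      simpa [A] using this
    refine hO.trans_isLittleO ?_
    simpa using (Asymptotics.isLittleO_norm_pow_id (E' := E) one_lt_two)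
  exact hA.differentiableAt.differentiableWithinAt

/-- The directional derivatives of a holomorphic function are holomorphic. -/
lemma differentiableOn_fderiv_apply [FiniteDimensional ℂ E] [CompleteSpace F] {W : Set E}
    (hW : IsOpen W) {f : E → F} (hf : DifferentiableOn ℂ f W) (w : E) :
    DifferentiableOn ℂ (fun z => fderiv ℂ f z w) W := by
  have hda : ∀ z ∈ W, DifferentiableAt ℂ f z := fun z hz => hf.differentiableAt (hW.mem_nhds hz)
  have hl : ∀ z ∈ W, ∀ w, LineDifferentiableAt ℂ f z w :=
    fun z hz w => (hda z hz).lineDifferentiableAt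
  have heq : EqOn (fun z => fderiv ℂ f z w) (fun z => lineDeriv ℂ f z w) W :=
    fun z hz => (hda z hz).lineDeriv_eq_fderiv.symm
  refine DifferentiableOn.congr ?_ heq
  refine differentiableOn_of_lineDifferentiable hW
    (continuousOn_lineDeriv hW hf.continuousOn hl w) fun z hz v => ?_
  obtain ⟨δ, hδ, hsub, hev, hlim⟩ :=
    exists_tendstoUniformlyOn_quotient hW hf.continuousOn hl hz w
  have hopen : IsOpen ((fun t : ℂ => z + t • v) ⁻¹' ball z δ) :=
    isOpen_ball.preimage (by fun_prop)
  have h0 : (0 : ℂ) ∈ (fun t : ℂ => z + t • v) ⁻¹' ball z δ := by simpa using hδ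
  have hlim' := (hlim.comp (fun t : ℂ => z + t • v)).tendstoLocallyUniformlyOn
  have := hlim'.differentiableOn ?_ hopen
  · exact this.differentiableAt (hopen.mem_nhds h0)
  · filter_upwards [hev] with s hs t ht
    refine DifferentiableAt.differentiableWithinAt ?_
    have h1 : DifferentiableAt ℂ f (z + t • v + s • w) := hda _ (hs _ ht)
    have h2 : DifferentiableAt ℂ f (z + t • v) := hda _ (hsub ht)
    refine DifferentiableAt.const_smul (DifferentiableAt.sub ?_ ?_) _
    · exact DifferentiableAt.comp (g := f) (f := fun t : ℂ => z + t • v + s • w) t h1 (by fun_prop)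
    · exact DifferentiableAt.comp (g := f) (f := fun t : ℂ => z + t • v) t h2 (by fun_prop)

end SeveralVariables

/-! ### The Jacobian, local sections and critical values -/

section Jacobian

variable {E : Type*} [NormedAddCommGroup E] [NormedSpace ℂ E] [FiniteDimensional ℂ E]

lemma differentiableOn_det_fderiv {U : Set E} (hU : IsOpen U) {φ : E → E}
    (hφ : DifferentiableOn ℂ φ U) : DifferentiableOn ℂ (fun z => (fderiv ℂ φ z).det) U := by
  let b := Module.finBasis ℂ E
  have hdet : ∀ z, (fderiv ℂ φ z).det =
      (Matrix.of fun i j => b.repr (fderiv ℂ φ z (b j)) i).det := by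
    intro z
    rw [ContinuousLinearMap.det, ← LinearMap.det_toMatrix b]
    congr 1
    ext i j
    simp [LinearMap.toMatrix_apply]
  simp only [hdet, Matrix.det_apply, Matrix.of_apply]
  have hentry : ∀ i j, DifferentiableOn ℂ (fun z => b.repr (fderiv ℂ φ z (b j)) i) U := by
    intro i j
    exact (LinearMap.toContinuousLinearMap (b.coord i)).differentiable.comp_differentiableOn
      (differentiableOn_fderiv_apply hU hφ (b j))
  refine DifferentiableOn.fun_sum fun σ _ => DifferentiableOn.const_smul ?_ _
  induction (Finset.univ : Finset (Fin (Module.finrank ℂ E))) using Finset.induction_on with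
  | empty => simp
  | insert a s ha ih =>
    simp only [Finset.prod_insert ha]
    exact (hentry (σ a) a).mul ih

/-- A holomorphic map has a holomorphic local section through every point where its Jacobian does
not vanish. -/
lemma exists_local_section {U : Set E} (hU : IsOpen U) {φ : E → E}
    (hφ : DifferentiableOn ℂ φ U) {x : E} (hx : x ∈ U) (hdet : (fderiv ℂ φ x).det ≠ 0) :
    ∃ ψ : E → E, ψ (φ x) = x ∧
      ∀ᶠ y in 𝓝 (φ x), ψ y ∈ U ∧ φ (ψ y) = y ∧ DifferentiableAt ℂ ψ y := by
  have : CompleteSpace E := FiniteDimensional.complete ℂ E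
  have hcd : ContDiffAt ℂ 1 φ x := by
    have : ContDiffOn ℂ (0 + 1) φ U := by
      rw [contDiffOn_succ_iff_fderiv_of_isOpen hU]
      refine ⟨hφ, by simp, ?_⟩
      rw [contDiffOn_zero, continuousOn_clm_apply]
      exact fun w => (differentiableOn_fderiv_apply hU hφ w).continuousOn
    rw [zero_add] at this
    exact this.contDiffAt (hU.mem_nhds hx)
  have hf' : HasFDerivAt φ
      (((fderiv ℂ φ x).toContinuousLinearEquivOfDetNeZero hdet : E ≃L[ℂ] E) : E →L[ℂ] E) x := by
    simpa using (hφ.differentiableAt (hU.mem_nhds hx)).hasFDerivAt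
  have hself := hcd.localInverse_apply_image hf' one_ne_zero
  have hinv := hcd.to_localInverse hf' one_ne_zero
  refine ⟨hcd.localInverse hf' one_ne_zero, hself, ?_⟩
  have h1 : ∀ᶠ y in 𝓝 (φ x), hcd.localInverse hf' one_ne_zero y ∈ U :=
    hinv.continuousAt.eventually_mem (by rw [hself]; exact hU.mem_nhds hx)
  have h2 := (hcd.hasStrictFDerivAt' hf' one_ne_zero).eventually_right_inverse
  have h3 := hinv.eventually (by simp)
  filter_upwards [h1, h2, h3] with y a b c
  exact ⟨a, b, c.differentiableAt one_ne_zero⟩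

open MeasureTheory in
/-- By Sard's lemma the set of critical values is Lebesgue null, and by Fubini almost every complex
line in a given direction meets it in a set with dense complement. -/
lemma dense_setOf_dense_slice {U : Set E} (hU : IsOpen U) {φ : E → E}
    (hφ : DifferentiableOn ℂ φ U) (w : E) :
    Dense {v : E | Dense
      {t : ℂ | v + t • w ∉ φ '' {z ∈ U | (fderiv ℂ φ z).det = 0}}} := by
  have : FiniteDimensional ℝ E := FiniteDimensional.complexToReal E
  have : ProperSpace E := FiniteDimensional.proper ℂ E
  borelize E
  let μ : Measure E := Measure.addHaar
  set S : Set E := φ '' {z ∈ U | (fderiv ℂ φ z).det = 0} with hS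
  have hnull : μ S = 0 := by
    refine addHaar_image_eq_zero_of_det_fderivWithin_eq_zero μ
      (f' := fun z => (fderiv ℂ φ z).restrictScalars ℝ) ?_ ?_
    · intro x hx
      exact ((hφ.differentiableAt (hU.mem_nhds hx.1)).hasFDerivAt.restrictScalars
        ℝ).hasFDerivWithinAt
    · intro x hx
      have h1 : LinearMap.det ((fderiv ℂ φ x : E →ₗ[ℂ] E)) = 0 := hx.2
      have h2 := LinearMap.det_restrictScalars (R := ℝ) (f := (fderiv ℂ φ x : E →ₗ[ℂ] E))
      rw [h1, Algebra.norm_complex_eq] at h2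
      exact h2.trans (by simp)
  let T := toMeasurable μ S
  have hT : μ T = 0 := by rw [measure_toMeasurable, hnull]
  have hmeas : MeasurableSet {p : E × ℂ | p.1 + p.2 • w ∉ T} := by
    have hc : Continuous fun p : E × ℂ => p.1 + p.2 • w := by fun_prop
    exact (hc.measurable (measurableSet_toMeasurable μ S)).compl
  have hae : ∀ᵐ v ∂μ, ∀ᵐ t : ℂ, v + t • w ∉ T := by
    rw [Measure.ae_ae_comm hmeas]
    refine Eventually.of_forall fun t => ?_
    rw [ae_iff]
    simp only [not_not]
    exact (measure_preimage_add_right μ (t • w) T).trans hT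
  refine Dense.mono ?_ (Measure.dense_of_ae hae)
  intro v hv
  refine Dense.mono ?_ (Measure.dense_of_ae hv)
  intro t ht hmem
  exact ht (subset_toMeasurable μ S hmem)

end Jacobian

/-! ### Radó's theorem on the disc -/

section Rado

/-- The real part of a continuous function on the unit circle is a uniform limit of real parts of
entire functions: trigonometric polynomials have the form `P + conj Q` with `P`, `Q`
polynomials, and `re (P + conj Q) = re (P + Q)`. -/
lemma exists_entire_re_approx {f : ℂ → ℂ} (hf : ContinuousOn f (sphere 0 1)) {ε : ℝ}
    (hε : 0 < ε) :
    ∃ P : ℂ → ℂ, Differentiable ℂ P ∧ ∀ z ∈ sphere (0 : ℂ) 1, |(f z).re - (P z).re| ≤ ε := by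
  have : Fact (0 < 2 * Real.pi) := ⟨Real.two_pi_pos⟩
  let c : AddCircle (2 * Real.pi) → ℂ := fun θ => (fourier 1 θ : ℂ)
  have hcn : ∀ θ, ‖c θ‖ = 1 := fun θ => Circle.norm_coe _
  have hcc : Continuous c := (fourier 1).continuous
  let g : C(AddCircle (2 * Real.pi), ℂ) :=
    ⟨fun θ => f (c θ), hf.comp_continuous hcc fun θ => by simp [hcn]⟩
  have hg : g ∈ (Submodule.span ℂ (range (@fourier (2 * Real.pi)))).topologicalClosure := by
    rw [span_fourier_closure_eq_top]; trivial
  obtain ⟨q, hq, hdist⟩ := Metric.mem_closure_iff.1 hg ε hε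
  have hform : ∃ P Q : ℂ → ℂ, Differentiable ℂ P ∧ Differentiable ℂ Q ∧
      ∀ θ, q θ = P (c θ) + (starRingEnd ℂ) (Q (c θ)) := by
    clear hdist
    induction hq using Submodule.span_induction with
    | mem x hx =>
      obtain ⟨n, rfl⟩ := hx
      have hpow : ∀ (n : ℕ) θ, (fourier (n : ℤ) θ : ℂ) = c θ ^ n := by
        intro n θ
        simp only [c, fourier_apply, one_smul, natCast_zsmul, AddCircle.toCircle_nsmul]
        simp
      rcases Int.eq_nat_or_neg n with ⟨k, rfl | rfl⟩
      · exact ⟨fun z => z ^ k, fun _ => 0, by fun_prop, by fun_prop, fun θ => by simp [hpow]⟩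
      · refine ⟨fun _ => 0, fun z => z ^ k, by fun_prop, by fun_prop, fun θ => ?_⟩
        rw [fourier_neg, hpow]
        simp
    | zero => exact ⟨0, 0, by fun_prop, by fun_prop, fun θ => by simp⟩
    | add x y _ _ hx hy =>
      obtain ⟨P, Q, hP, hQ, h⟩ := hx
      obtain ⟨P', Q', hP', hQ', h'⟩ := hy
      refine ⟨P + P', Q + Q', hP.add hP', hQ.add hQ', fun θ => ?_⟩
      simp only [ContinuousMap.add_apply, h, h', Pi.add_apply, map_add]
      ring
    | smul a x _ hx =>
      obtain ⟨P, Q, hP, hQ, h⟩ := hx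
      refine ⟨fun z => a * P z, fun z => (starRingEnd ℂ) a * Q z, by fun_prop, by fun_prop,
        fun θ => ?_⟩
      simp only [ContinuousMap.smul_apply, h, smul_eq_mul, map_mul, Complex.conj_conj]
      ring
  obtain ⟨P, Q, hP, hQ, hPQ⟩ := hform
  refine ⟨P + Q, hP.add hQ, fun z hz => ?_⟩
  obtain ⟨θ, rfl⟩ : ∃ θ, c θ = z := by
    have hz1 : ‖z‖ = 1 := by simpa using hz
    refine ⟨(Complex.arg z : ℝ), ?_⟩
    simp only [c, fourier_coe_apply]
    conv_rhs => rw [← Complex.norm_mul_exp_arg_mul_I z, hz1]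
    have : (Real.pi : ℂ) ≠ 0 := by exact_mod_cast Real.pi_ne_zero
    push_cast
    rw [one_mul]
    congr 1
    field_simp
  have h1 : ‖g θ - q θ‖ ≤ ε := by
    rw [← dist_eq_norm]
    exact (ContinuousMap.dist_apply_le_dist θ).trans hdist.le
  have h2 := (Complex.abs_re_le_norm _).trans h1
  have h3 : (g θ - q θ).re = (f (c θ)).re - ((P + Q) (c θ)).re := by
    rw [hPQ]
    simp [g]
  rwa [h3] at h2

/-- A uniform limit of real parts of entire functions on the unit disc is, on the disc of radius
`1 / 2`, the real part of a holomorphic function; the Borel–Carathéodory theorem controls the imaginary parts. -/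
lemma exists_holomorphic_re_eq {u : ℂ → ℝ}
    (hu : ∀ ε > 0, ∃ P : ℂ → ℂ, Differentiable ℂ P ∧ ∀ z ∈ ball (0 : ℂ) 1, |u z - (P z).re| ≤ ε) :
    ∃ F : ℂ → ℂ, DifferentiableOn ℂ F (ball 0 (1 / 2)) ∧
      ∀ z ∈ ball (0 : ℂ) (1 / 2), (F z).re = u z := by
  choose P hP hPu using fun n : ℕ => hu (1 / ((n : ℝ) + 1)) (by positivity)
  let A : ℕ → ℂ → ℂ := fun n z => P n z - ((P n 0).im : ℂ) * Complex.I
  have hA : ∀ n, Differentiable ℂ (A n) := fun n => (hP n).sub_const _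
  have hAre : ∀ n z, (A n z).re = (P n z).re := fun n z => by simp [A]
  have hA0 : ∀ n, (A n 0).im = 0 := fun n => by simp [A]
  have hbound : ∀ m n : ℕ, ∀ η > 0, 1 / ((m : ℝ) + 1) ≤ η → 1 / ((n : ℝ) + 1) ≤ η →
      ∀ z ∈ ball (0 : ℂ) (1 / 2), ‖A m z - A n z‖ ≤ 10 * η := by
    intro m n η hη hm hn z hz
    have hd : ∀ y ∈ ball (0 : ℂ) 1, |(A m y).re - (A n y).re| ≤ 2 * η := by
      intro y hy
      rw [hAre, hAre]
      have h1 := abs_le.1 (hPu m y hy)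
      have h2 := abs_le.1 (hPu n y hy)
      rw [abs_le]
      constructor <;> linarith [h1.1, h1.2, h2.1, h2.2]
    have h0 : ‖A m 0 - A n 0‖ ≤ 2 * η := by
      have : A m 0 - A n 0 = (((A m 0).re - (A n 0).re : ℝ) : ℂ) := by
        apply Complex.ext <;> simp [hA0]
      rw [this, Complex.norm_real]
      exact hd 0 (by simp)
    have hz1 : ‖z‖ < 1 / 2 := mem_ball_zero_iff.1 hz
    have hBC := Complex.borelCaratheodory_zero
      (f := fun y => (A m y - A n y) - (A m 0 - A n 0)) (M := 4 * η) (R := 1) (z := z)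
      (by positivity) (((hA m).sub (hA n)).sub_const _).differentiableOn ?_ one_pos
      (mem_ball_zero_iff.2 (by linarith)) (by simp)
    · have h3 : 2 * (4 * η) * ‖z‖ / (1 - ‖z‖) ≤ 8 * η := by
        rw [div_le_iff₀ (by linarith)]
        nlinarith [norm_nonneg z]
      calc ‖A m z - A n z‖ = ‖(A m z - A n z) - (A m 0 - A n 0) + (A m 0 - A n 0)‖ := by
            rw [sub_add_cancel]
        _ ≤ ‖(A m z - A n z) - (A m 0 - A n 0)‖ + ‖A m 0 - A n 0‖ := norm_add_le _ _
        _ ≤ 10 * η := by linarith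
    · intro y hy
      have h1 := abs_le.1 (hd y hy)
      have h2 := abs_le.1 (hd 0 (by simp))
      simp only [mem_ofPred_eq, Complex.sub_re]
      linarith [h1.2, h2.1]
  have hev : ∀ η : ℝ, 0 < η → ∃ N : ℕ, ∀ n ≥ N, 1 / ((n : ℝ) + 1) ≤ η := by
    intro η hη
    obtain ⟨N, hN⟩ := exists_nat_one_div_lt hη
    exact ⟨N, fun n hn => (Nat.one_div_le_one_div hn).trans hN.le⟩
  have hcauchy : UniformCauchySeqOn A atTop (ball 0 (1 / 2)) := by
    rw [Metric.uniformCauchySeqOn_iff]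
    intro ε hε
    obtain ⟨N, hN⟩ := hev (ε / 20) (by positivity)
    refine ⟨N, fun m hm n hn z hz => ?_⟩
    rw [dist_eq_norm]
    linarith [hbound m n (ε / 20) (by positivity) (hN m hm) (hN n hn) z hz]
  have hlim : ∀ z ∈ ball (0 : ℂ) (1 / 2), ∃ y, Tendsto (fun n => A n z) atTop (𝓝 y) :=
    fun z hz => cauchySeq_tendsto_of_complete (hcauchy.cauchySeq hz)
  choose! F hF using hlim
  refine ⟨F, ?_, fun z hz => ?_⟩
  · exact (hcauchy.tendstoUniformlyOn_of_tendsto hF).tendstoLocallyUniformlyOn.differentiableOn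
      (Eventually.of_forall fun n => (hA n).differentiableOn) isOpen_ball
  · refine tendsto_nhds_unique ((Complex.continuous_re.tendsto _).comp (hF z hz)) ?_
    rw [Metric.tendsto_atTop]
    intro ε hε
    obtain ⟨N, hN⟩ := hev (ε / 2) (by positivity)
    refine ⟨N, fun n hn => ?_⟩
    have := hPu n z (ball_subset_ball (by norm_num) hz)
    rw [dist_comm, Real.dist_eq, Function.comp_apply, hAre]
    linarith [hN n hn]

lemma deriv_eq_of_re_eventuallyEq {F f : ℂ → ℂ} {z : ℂ} (hF : DifferentiableAt ℂ F z)
    (hf : DifferentiableAt ℂ f z) (h : ∀ᶠ y in 𝓝 z, (F y).re = (f y).re) :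
    deriv F z = deriv f z := by
  have key : ∀ w : ℂ, ((deriv F z) * w).re = ((deriv f z) * w).re := by
    intro w
    have h1 := (Complex.reCLM.hasFDerivAt.comp z (hF.hasFDerivAt.restrictScalars ℝ))
    have h2 := (Complex.reCLM.hasFDerivAt.comp z (hf.hasFDerivAt.restrictScalars ℝ))
    have h3 := h1.unique (h2.congr_of_eventuallyEq h)
    have h4 := DFunLike.congr_fun h3 w
    simpa [mul_comm w] using h4
  apply Complex.ext
  · simpa using key 1
  · simpa using key Complex.I

/-- **Radó-type theorem.** Let `T` be a set dense in the unit disc such that the maximum principle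
holds on `T` for functions that are continuous on the closed disc and holomorphic on `T`.
Then such functions are holomorphic on the concentric disc of radius `1 / 2`, including outside
`T`. The maximum principle for `exp (± (f - P))` shows that an entire `P` with `re P` close to
`re f` on the circle has `re P` close to `re f` on the disc, so `re f` and `im f` are real parts of
holomorphic functions; the Cauchy–Riemann equations between these extend from `T` by density. -/
lemma rado {T : Set ℂ} (hTd : ball (0 : ℂ) 1 ⊆ closure T)
    (hmax : ∀ F : ℂ → ℂ, ContinuousOn F (closedBall 0 1) → (∀ t ∈ T, DifferentiableAt ℂ F t) →
      ∀ M : ℝ, 0 < M → (∀ t ∈ sphere (0 : ℂ) 1, ‖F t‖ ≤ M) → ∀ t ∈ T, ‖F t‖ ≤ M)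
    {f : ℂ → ℂ} (hfc : ContinuousOn f (closedBall 0 1)) (hfT : ∀ t ∈ T, DifferentiableAt ℂ f t) :
    DifferentiableOn ℂ f (ball 0 (1 / 2)) := by
  have hre : ∀ g : ℂ → ℂ, ContinuousOn g (closedBall 0 1) → (∀ t ∈ T, DifferentiableAt ℂ g t) →
      ∃ F : ℂ → ℂ, DifferentiableOn ℂ F (ball 0 (1 / 2)) ∧
        ∀ z ∈ ball (0 : ℂ) (1 / 2), (F z).re = (g z).re := by
    intro g hgc hgT
    refine exists_holomorphic_re_eq fun ε hε => ?_
    obtain ⟨P, hP, hPg⟩ := exists_entire_re_approx (hgc.mono sphere_subset_closedBall) hε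
    refine ⟨P, hP, ?_⟩
    have hPc : ContinuousOn P (closedBall 0 1) := hP.continuous.continuousOn
    have honT : ∀ t ∈ T, |(g t).re - (P t).re| ≤ ε := by
      intro t ht
      have h1 := hmax (fun t => Complex.exp (g t - P t)) (hgc.sub hPc).cexp
        (fun t ht => ((hgT t ht).sub (hP t)).cexp) (Real.exp ε) (Real.exp_pos _)
        (fun s hs => by
          rw [Complex.norm_exp, Real.exp_le_exp, Complex.sub_re]
          exact (abs_le.1 (hPg s hs)).2) t ht
      have h2 := hmax (fun t => Complex.exp (P t - g t)) (hPc.sub hgc).cexp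
        (fun t ht => ((hP t).sub (hgT t ht)).cexp) (Real.exp ε) (Real.exp_pos _)
        (fun s hs => by
          rw [Complex.norm_exp, Real.exp_le_exp, Complex.sub_re]
          linarith [(abs_le.1 (hPg s hs)).1]) t ht
      rw [Complex.norm_exp, Real.exp_le_exp, Complex.sub_re] at h1 h2
      exact abs_le.2 ⟨by linarith, h1⟩
    intro z hz
    have hzc := hTd hz
    have hcz : ContinuousAt (fun t => |(g t).re - (P t).re|) z := by
      have h1 : ContinuousAt g z :=
        hgc.continuousAt (mem_of_superset (isOpen_ball.mem_nhds hz) ball_subset_closedBall)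
      have h2 : ContinuousAt P z := hP.continuous.continuousAt
      exact ((Complex.continuous_re.continuousAt.comp h1).sub
        (Complex.continuous_re.continuousAt.comp h2)).abs
    have : (𝓝[T] z).NeBot := mem_closure_iff_nhdsWithin_neBot.1 hzc
    exact le_of_tendsto (hcz.tendsto.mono_left nhdsWithin_le_nhds)
      (eventually_of_mem self_mem_nhdsWithin honT)
  obtain ⟨F, hF, hFre⟩ := hre f hfc hfT
  obtain ⟨G, hG, hGre⟩ := hre (fun z => -Complex.I * f z) (continuousOn_const.mul hfc)
    (fun t ht => (hfT t ht).const_mul _)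
  have hnhds : ∀ z ∈ ball (0 : ℂ) (1 / 2), ball (0 : ℂ) (1 / 2) ∈ 𝓝 z :=
    fun z hz => isOpen_ball.mem_nhds hz
  -- `G + i F` has derivative zero on the dense set `T`, hence on the whole disc.
  have hderT : ∀ z ∈ ball (0 : ℂ) (1 / 2) ∩ T, deriv (fun y => G y + Complex.I * F y) z = 0 := by
    rintro z ⟨hz, hzT⟩
    have hFz := hF.differentiableAt (hnhds z hz)
    have hGz := hG.differentiableAt (hnhds z hz)
    have h1 := deriv_eq_of_re_eventuallyEq hFz (hfT z hzT) (eventually_of_mem (hnhds z hz) hFre)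
    have h2 := deriv_eq_of_re_eventuallyEq hGz ((hfT z hzT).const_mul (-Complex.I))
      (eventually_of_mem (hnhds z hz) hGre)
    rw [deriv_fun_add hGz (hFz.const_mul _), deriv_const_mul _ hFz, h2, h1,
      deriv_const_mul _ (hfT z hzT)]
    ring
  have hHd : DifferentiableOn ℂ (fun y => G y + Complex.I * F y) (ball 0 (1 / 2)) :=
    hG.add (hF.const_mul _)
  have hder : ∀ z ∈ ball (0 : ℂ) (1 / 2), deriv (fun y => G y + Complex.I * F y) z = 0 := by
    intro z hz
    have hc : ContinuousAt (deriv fun y => G y + Complex.I * F y) z :=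
      (hHd.deriv isOpen_ball).continuousOn.continuousAt (hnhds z hz)
    have hzc : z ∈ closure (ball (0 : ℂ) (1 / 2) ∩ T) :=
      isOpen_ball.inter_closure ⟨hz, hTd (ball_subset_ball (by norm_num) hz)⟩
    have : (𝓝[ball (0 : ℂ) (1 / 2) ∩ T] z).NeBot := mem_closure_iff_nhdsWithin_neBot.1 hzc
    refine tendsto_nhds_unique (l := 𝓝[ball (0 : ℂ) (1 / 2) ∩ T] z)
      (hc.tendsto.mono_left nhdsWithin_le_nhds)
      (tendsto_const_nhds.congr' ?_)
    exact eventually_of_mem self_mem_nhdsWithin fun y hy => (hderT y hy).symm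
  obtain ⟨a, ha⟩ := isOpen_ball.exists_is_const_of_deriv_eq_zero
    (convex_ball (0 : ℂ) (1 / 2)).isPreconnected hHd hder
  have hfF : ∀ z ∈ ball (0 : ℂ) (1 / 2), f z = F z + Complex.I * (a.re : ℂ) := by
    intro z hz
    have h1 := hFre z hz
    have h2 := hGre z hz
    have h3 := congrArg Complex.re (ha z hz)
    simp at h1 h2 h3
    apply Complex.ext
    · simp [h1]
    · simp
      linarith
  exact (hF.add_const _).congr hfF

end Rado

/-! ### The maximum principle off the critical values -/

/-- **Maximum principle with a weight.** Let `X` be a compact set lying over the closed unit disc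
through which, at every point over the open disc where the weight `J` does not vanish, a section
passes along which `J` and `F` are holomorphic. Then `F` is bounded by its supremum over the unit
circle at all points of the disc under `{J ≠ 0}`. This comes from the maximum principle for
`‖F‖ ^ n * ‖J‖` on `X`, letting `n` tend to infinity. -/
lemma norm_le_of_weight {E : Type*} [TopologicalSpace E] [T2Space E]
    {X : Set (ℂ × E)} (hX : IsCompact X)
    (hX1 : ∀ p ∈ X, p.1 ∈ closedBall (0 : ℂ) 1) {J : E → ℂ}
    (hJ : ContinuousOn (fun p : ℂ × E => J p.2) X) {F : ℂ → ℂ}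
    (hF : ContinuousOn F (closedBall 0 1))
    (hloc : ∀ p ∈ X, p.1 ∈ ball (0 : ℂ) 1 → J p.2 ≠ 0 → ∃ g : ℂ → E, g p.1 = p.2 ∧
      ∀ᶠ s in 𝓝 p.1, (s, g s) ∈ X ∧ DifferentiableAt ℂ (fun s => J (g s)) s ∧
        DifferentiableAt ℂ F s)
    {M : ℝ} (hM : 0 < M) (hFM : ∀ t ∈ sphere (0 : ℂ) 1, ‖F t‖ ≤ M) :
    ∀ p ∈ X, J p.2 ≠ 0 → ‖F p.1‖ ≤ M := by
  obtain ⟨C, hC⟩ := hX.exists_bound_of_continuousOn hJ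
  have hstep : ∀ n : ℕ, ∀ p ∈ X, ‖F p.1‖ ^ n * ‖J p.2‖ ≤ M ^ n * C := by
    intro n p hp
    by_contra! hlt
    let H : ℂ × E → ℝ := fun p => ‖F p.1‖ ^ n * ‖J p.2‖
    have hH : ContinuousOn H X :=
      ((hF.comp continuousOn_fst hX1).norm.pow n).mul hJ.norm
    obtain ⟨q₀, hq₀, hmax₀⟩ := hX.exists_isMaxOn ⟨p, hp⟩ hH
    have hmax : ∀ y ∈ X, H y ≤ H q₀ := fun y hy => hmax₀ hy
    have hK : IsCompact (X ∩ H ⁻¹' {H q₀}) :=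
      hX.of_isClosed_subset (hH.preimage_isClosed_of_isClosed hX.isClosed isClosed_singleton)
        inter_subset_left
    -- Among the maximum points of `H`, pick one whose base point lies furthest to the right.
    obtain ⟨q, ⟨hqX, hqH⟩, hqre⟩ := hK.exists_isMaxOn ⟨q₀, hq₀, rfl⟩
      (f := fun p : ℂ × E => p.1.re) (by fun_prop)
    have hqH' : H q = H q₀ := hqH
    have hC0 : 0 ≤ C := (norm_nonneg _).trans (hC p hp)
    have hqbig : M ^ n * C < H q := by
      rw [hqH']
      exact hlt.trans_le (hmax p hp)
    have hqball : q.1 ∈ ball (0 : ℂ) 1 := by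
      by_contra hnot
      have hsph : q.1 ∈ sphere (0 : ℂ) 1 := by
        have h1 := hX1 q hqX
        rw [mem_closedBall] at h1
        rw [mem_ball, not_lt] at hnot
        exact le_antisymm h1 hnot
      have : H q ≤ M ^ n * C := by
        have h1 := hFM _ hsph
        have h2 := hC q hqX
        simp only [H]
        gcongr
      linarith
    have hqJ : J q.2 ≠ 0 := by
      intro h0
      have : H q = 0 := by simp [H, h0]
      have : 0 ≤ M ^ n * C := by positivity
      linarith
    obtain ⟨g, hg, hev⟩ := hloc q hqX hqball hqJ
    have hnorm : ∀ s, ‖F s ^ n * J (g s)‖ = H (s, g s) := fun s => by simp [H]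
    have hconst := Complex.norm_eventually_eq_of_isLocalMax
      (f := fun s => F s ^ n * J (g s)) (c := q.1)
      (hev.mono fun s hs => (hs.2.2.pow n).mul hs.2.1)
      (hev.mono fun s hs => by
        simp only [Function.comp_apply, hnorm]
        rw [hg, Prod.mk.eta, hqH']
        exact hmax _ hs.1)
    have hright : ∀ᶠ s in 𝓝 q.1, s.re ≤ q.1.re := by
      filter_upwards [hev, hconst] with s hs hs'
      rw [hnorm, hnorm, hg, Prod.mk.eta, hqH'] at hs'
      exact hqre ⟨hs.1, hs'⟩
    have hpath : Tendsto (fun ε : ℝ => q.1 + (ε : ℂ)) (𝓝[>] 0) (𝓝 q.1) := by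
      have : ContinuousAt (fun ε : ℝ => q.1 + (ε : ℂ)) 0 := by fun_prop
      simpa [ContinuousAt] using this.tendsto.mono_left nhdsWithin_le_nhds
    obtain ⟨ε, h1, h2⟩ := ((hpath.eventually hright).and self_mem_nhdsWithin).exists
    have h3 : (0 : ℝ) < ε := h2
    simp at h1
    linarith
  intro p hp hJp
  by_contra! hlt
  have hratio : 1 < ‖F p.1‖ / M := (one_lt_div hM).2 hlt
  have hJpos : 0 < ‖J p.2‖ := norm_pos_iff.2 hJp
  obtain ⟨n, hn⟩ := pow_unbounded_of_one_lt (C / ‖J p.2‖) hratio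
  have h1 := hstep n p hp
  rw [div_pow, div_lt_div_iff₀ hJpos (by positivity)] at hn
  linarith

section Descent

variable {E : Type*} [NormedAddCommGroup E] [NormedSpace ℂ E] [FiniteDimensional ℂ E]

/-- A proper surjection is a quotient map, so a function on `V` with continuous pullback to `U` is
continuous. -/
lemma continuousOn_of_comp_proper {U V : Set E} (hV : IsOpen V) {φ : E → E}
    (hφ : ContinuousOn φ U) (hmaps : MapsTo φ U V) (hsurj : φ '' U = V)
    (hproper : ∀ K : Set E, K ⊆ V → IsCompact K → IsCompact {x ∈ U | φ x ∈ K})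
    {f h : E → ℂ} (hh : ContinuousOn h U) (hfh : ∀ z ∈ U, f (φ z) = h z) : ContinuousOn f V := by
  have : ProperSpace E := FiniteDimensional.proper ℂ E
  have : LocallyCompactSpace V := hV.locallyCompactSpace
  let φ' : U → V := hmaps.restrict φ U V
  have hc : Continuous φ' := hφ.mapsToRestrict hmaps
  have hp : IsProperMap φ' := by
    rw [isProperMap_iff_isCompact_preimage]
    refine ⟨hc, fun K hK => ?_⟩
    rw [Subtype.isCompact_iff] at hK ⊢
    convert hproper (Subtype.val '' K) (by simp) hK using 1
    ext x
    constructor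
    · rintro ⟨y, hy, rfl⟩
      exact ⟨y.2, φ' y, hy, rfl⟩
    · rintro ⟨hx, y, hy, hyx⟩
      refine ⟨⟨x, hx⟩, ?_, rfl⟩
      have : φ' ⟨x, hx⟩ = y := Subtype.ext hyx.symm
      rwa [mem_preimage, this]
  have hs : Function.Surjective φ' := by
    rintro ⟨v, hv⟩
    rw [← hsurj] at hv
    obtain ⟨x, hx, rfl⟩ := hv
    exact ⟨⟨x, hx⟩, rfl⟩
  have hq := hp.isClosedMap.isQuotientMap hc hs
  rw [continuousOn_iff_continuous_domRestrict, hq.continuous_iff]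
  refine (continuousOn_iff_continuous_domRestrict.1 hh).congr fun x => ?_
  exact (hfh x x.2).symm

/-- Over a slice disc in `V` that meets the critical values in a set with dense complement, the
maximum principle holds for functions holomorphic off the critical values, the Jacobian serving as
weight on the preimage of the slice. Hence a continuous `f` that is holomorphic off
the critical values is holomorphic on the slice. -/
lemma differentiableOn_slice {U V : Set E} (hU : IsOpen U)
    {φ : E → E} (hφ : DifferentiableOn ℂ φ U) (hsurj : φ '' U = V)
    (hproper : ∀ K : Set E, K ⊆ V → IsCompact K → IsCompact {x ∈ U | φ x ∈ K})
    {S : Set E} (hS : IsOpen (V \ S))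
    (hJS : ∀ x ∈ U, φ x ∈ S ↔ (fderiv ℂ φ x).det = 0)
    {f : E → ℂ} (hfc : ContinuousOn f V) (hfd : ∀ v ∈ V \ S, DifferentiableAt ℂ f v)
    {v w : E} (hvw : ∀ t ∈ closedBall (0 : ℂ) 1, v + t • w ∈ V)
    (hd : Dense {t : ℂ | v + t • w ∉ S}) :
    DifferentiableOn ℂ (fun t : ℂ => f (v + t • w)) (ball 0 (1 / 2)) := by
  have hline : Continuous fun t : ℂ => v + t • w := by fun_prop
  let T : Set ℂ := ball 0 1 ∩ (fun t : ℂ => v + t • w) ⁻¹' (V \ S)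
  have hTo : IsOpen T := isOpen_ball.inter (hS.preimage hline)
  have hbV : ∀ t ∈ ball (0 : ℂ) 1, v + t • w ∈ V := fun t ht => hvw t (ball_subset_closedBall ht)
  let K : Set E := (fun t : ℂ => v + t • w) '' closedBall 0 1
  have hK : IsCompact K := (isCompact_closedBall _ _).image hline
  have hKV : K ⊆ V := by rintro _ ⟨t, ht, rfl⟩; exact hvw t ht
  have hQ : IsCompact (closedBall (0 : ℂ) 1 ×ˢ {x ∈ U | φ x ∈ K}) :=
    (isCompact_closedBall _ _).prod (hproper K hKV hK)
  let X : Set (ℂ × E) := (closedBall (0 : ℂ) 1 ×ˢ {x ∈ U | φ x ∈ K}) ∩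
    (fun p : ℂ × E => φ p.2 - (v + p.1 • w)) ⁻¹' {0}
  have hX : IsCompact X := by
    refine hQ.of_isClosed_subset (ContinuousOn.preimage_isClosed_of_isClosed ?_ hQ.isClosed
      isClosed_singleton) inter_subset_left
    refine ContinuousOn.sub ?_ (by fun_prop)
    exact hφ.continuousOn.comp continuousOn_snd fun p hp => hp.2.1
  have hXmem : ∀ t x, (t, x) ∈ X ↔ t ∈ closedBall (0 : ℂ) 1 ∧ x ∈ U ∧ φ x = v + t • w := by
    intro t x
    constructor
    · rintro ⟨⟨h1, h2, -⟩, h3⟩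
      exact ⟨h1, h2, sub_eq_zero.1 h3⟩
    · rintro ⟨h1, h2, h3⟩
      exact ⟨⟨h1, h2, t, h1, h3.symm⟩, sub_eq_zero.2 h3⟩
  have hJd := differentiableOn_det_fderiv hU hφ
  refine rado (T := T) ?_ ?_ (hfc.comp hline.continuousOn hvw) ?_
  · intro t ht
    have h1 : t ∈ closure (ball 0 1 ∩ {t : ℂ | v + t • w ∉ S}) :=
      isOpen_ball.inter_closure (And.intro ht (hd t))
    have h2 : ball 0 1 ∩ {t : ℂ | v + t • w ∉ S} ⊆ T := fun s hs => ⟨hs.1, hbV s hs.1, hs.2⟩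
    exact closure_mono h2 h1
  · intro F hF hFT M hM hFM t ht
    obtain ⟨x, hx, hxt⟩ : v + t • w ∈ φ '' U := by rw [hsurj]; exact ht.2.1
    refine norm_le_of_weight (J := fun x => (fderiv ℂ φ x).det) hX (fun p hp => hp.1.1) ?_ hF ?_
      hM hFM (t, x) ((hXmem t x).2 ⟨ball_subset_closedBall ht.1, hx, hxt⟩) ?_
    · exact hJd.continuousOn.comp continuousOn_snd fun p hp => hp.1.2.1
    · rintro ⟨s, y⟩ hp hs hJy
      obtain ⟨-, hyU, hys⟩ := (hXmem s y).1 hp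
      obtain ⟨ψ, hψ, hψev⟩ := exists_local_section hU hφ hyU hJy
      have hsT : s ∈ T := ⟨hs, hbV s hs, fun hmem => hJy ((hJS y hyU).1 (hys ▸ hmem))⟩
      rw [hys] at hψ hψev
      refine ⟨fun r => ψ (v + r • w), hψ, ?_⟩
      filter_upwards [hline.continuousAt.eventually hψev, hTo.mem_nhds hsT] with r hr hrT
      obtain ⟨h1, h2, h3⟩ := hr
      refine ⟨(hXmem _ _).2 ⟨ball_subset_closedBall hrT.1, h1, h2⟩, ?_, hFT r hrT⟩
      have h4 : DifferentiableAt ℂ (fun r : ℂ => ψ (v + r • w)) r :=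
        DifferentiableAt.comp (g := ψ) (f := fun r : ℂ => v + r • w) r h3 (by fun_prop)
      exact DifferentiableAt.comp (g := fun x => (fderiv ℂ φ x).det) r
        (hJd.differentiableAt (hU.mem_nhds h1)) h4
    · intro h0
      have h1 := (hJS x hx).2 h0
      rw [hxt] at h1
      exact ht.2.2 h1
  · intro t ht
    exact DifferentiableAt.comp (g := f) (f := fun r : ℂ => v + r • w) t (hfd _ ht.2) (by fun_prop)

end Descent

/-! ### Descent along the map -/

/-- If `φ : U → V` is an admissible proper holomorphic map and `h`
is holomorphic on `U` and constant on the fibers of `φ`, then `h = f ∘ φ` for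
some `f` holomorphic on `V`. -/
theorem stmt_5 (d : ℕ) (hd : 1 ≤ d)
    (U V : Set (EuclideanSpace ℂ (Fin d)))
    (hUopen : IsOpen U) (hUconn : IsConnected U)
    (hVopen : IsOpen V) (hVconn : IsConnected V)
    (φ : EuclideanSpace ℂ (Fin d) → EuclideanSpace ℂ (Fin d))
    (hφholo : DifferentiableOn ℂ φ U)
    (hφmaps : Set.MapsTo φ U V)
    (hφsurj : φ '' U = V)
    (hφproper : ∀ K : Set (EuclideanSpace ℂ (Fin d)), K ⊆ V → IsCompact K →
      IsCompact {x ∈ U | φ x ∈ K})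
    (hadm : ∀ v ∈ φ '' {z ∈ U | (fderiv ℂ φ z).det = 0},
      ∃! x, x ∈ U ∧ φ x = v)
    (h : EuclideanSpace ℂ (Fin d) → ℂ)
    (hholo : DifferentiableOn ℂ h U)
    (hfib : ∀ x ∈ U, ∀ y ∈ U, φ x = φ y → h x = h y) :
    ∃ f : EuclideanSpace ℂ (Fin d) → ℂ,
      DifferentiableOn ℂ f V ∧ ∀ z ∈ U, h z = f (φ z) := by
  let f : EuclideanSpace ℂ (Fin d) → ℂ := fun v => h (Function.invFunOn φ U v)
  have hfh : ∀ z ∈ U, f (φ z) = h z := fun z hz =>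
    hfib _ (Function.invFunOn_mem ⟨z, hz, rfl⟩) _ hz (Function.invFunOn_eq ⟨z, hz, rfl⟩)
  refine ⟨f, ?_, fun z hz => (hfh z hz).symm⟩
  have hfc : ContinuousOn f V := continuousOn_of_comp_proper hVopen hφholo.continuousOn hφmaps
    hφsurj hφproper hholo.continuousOn hfh
  set S := φ '' {z ∈ U | (fderiv ℂ φ z).det = 0} with hSdef
  -- Admissibility enters here: the whole fiber over a critical value is critical.
  have hJS : ∀ x ∈ U, φ x ∈ S ↔ (fderiv ℂ φ x).det = 0 := by
    intro x hx
    refine ⟨fun hmem => ?_, fun h0 => ⟨x, ⟨hx, h0⟩, rfl⟩⟩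
    obtain ⟨z, ⟨hz, hz0⟩, hzx⟩ := id hmem
    rwa [(hadm _ hmem).unique ⟨hx, rfl⟩ ⟨hz, hzx⟩]
  have hsec : ∀ v ∈ V \ S, ∃ ψ : EuclideanSpace ℂ (Fin d) → EuclideanSpace ℂ (Fin d),
      ψ v ∈ U ∧ (fderiv ℂ φ (ψ v)).det ≠ 0 ∧
      ∀ᶠ y in 𝓝 v, ψ y ∈ U ∧ φ (ψ y) = y ∧ DifferentiableAt ℂ ψ y := by
    rintro v ⟨hv, hvS⟩
    rw [← hφsurj] at hv
    obtain ⟨x, hx, rfl⟩ := hv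
    have hx0 : (fderiv ℂ φ x).det ≠ 0 := fun h0 => hvS ((hJS x hx).2 h0)
    obtain ⟨ψ, hψ, hev⟩ := exists_local_section hUopen hφholo hx hx0
    exact ⟨ψ, by rwa [hψ], by rwa [hψ], hev⟩
  have hSopen : IsOpen (V \ S) := by
    rw [isOpen_iff_mem_nhds]
    intro v hv
    obtain ⟨ψ, hψU, hψ0, hev⟩ := hsec v hv
    have hJc : ContinuousAt (fun y => (fderiv ℂ φ (ψ y)).det) v :=
      ContinuousAt.comp (g := fun x => (fderiv ℂ φ x).det)
        ((differentiableOn_det_fderiv hUopen hφholo).continuousOn.continuousAt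
          (hUopen.mem_nhds hψU)) hev.self_of_nhds.2.2.continuousAt
    filter_upwards [hev, hJc.eventually_ne hψ0, hVopen.mem_nhds hv.1] with y hy hy0 hyV
    refine ⟨hyV, fun hyS => hy0 ((hJS _ hy.1).1 ?_)⟩
    rwa [hy.2.1]
  have hfd : ∀ v ∈ V \ S, DifferentiableAt ℂ f v := by
    intro v hv
    obtain ⟨ψ, hψU, -, hev⟩ := hsec v hv
    have h1 : DifferentiableAt ℂ (fun y => h (ψ y)) v :=
      DifferentiableAt.comp (g := h) v (hholo.differentiableAt (hUopen.mem_nhds hψU))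
        hev.self_of_nhds.2.2
    refine h1.congr_of_eventuallyEq ?_
    filter_upwards [hev] with y hy
    rw [← hfh _ hy.1, hy.2.1]
  refine differentiableOn_of_lineDifferentiable hVopen hfc fun z hz w => ?_
  obtain ⟨ρ, hρ, hball⟩ := Metric.isOpen_iff.1 hVopen z hz
  -- Rescale the direction so that the unit disc of every line through `ball z (ρ / 2)` stays in
  -- `ball z ρ`.
  obtain ⟨c, hc0, hcw⟩ : ∃ c : ℂ, c ≠ 0 ∧ ‖c • w‖ < ρ / 2 := by
    have h1 : ∀ᶠ c : ℂ in 𝓝[≠] 0, ‖c • w‖ < ρ / 2 := by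
      refine nhdsWithin_le_nhds ?_
      have : ContinuousAt (fun c : ℂ => ‖c • w‖) 0 := by fun_prop
      exact this.eventually_lt continuousAt_const (by simpa using hρ)
    obtain ⟨c, h2, h3⟩ := (h1.and self_mem_nhdsWithin).exists
    exact ⟨c, h3, h2⟩
  have hdisc : ∀ v ∈ ball z (ρ / 2), ∀ t ∈ closedBall (0 : ℂ) 1, v + t • c • w ∈ V := by
    intro v hv t ht
    apply hball
    rw [mem_ball, dist_eq_norm] at hv ⊢
    have h1 : ‖t • c • w‖ ≤ ‖c • w‖ := by
      rw [norm_smul]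
      exact mul_le_of_le_one_left (norm_nonneg _) (mem_closedBall_zero_iff.1 ht)
    have h2 : v + t • c • w - z = (v - z) + t • c • w := by abel
    rw [h2]
    linarith [norm_add_le (v - z) (t • c • w)]
  have hzb : z ∈ ball z (ρ / 2) := mem_ball_self (by positivity)
  set D := {v | Dense {t : ℂ | v + t • c • w ∉ S}} with hD
  have hDd : Dense D := dense_setOf_dense_slice hUopen hφholo (c • w)
  have hne : (𝓝[D] z).NeBot := mem_closure_iff_nhdsWithin_neBot.1 (hDd z)
  have hlim : TendstoLocallyUniformlyOn
      (fun (v : EuclideanSpace ℂ (Fin d)) (t : ℂ) => f (v + t • c • w))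
      (fun t => f (z + t • c • w)) (𝓝[D] z) (ball 0 (1 / 2)) := by
    rw [tendstoLocallyUniformlyOn_iff_forall_tendsto]
    intro t ht
    have ht1 : z + t • c • w ∈ V :=
      hdisc z hzb t (ball_subset_closedBall (ball_subset_ball (by norm_num) ht))
    have hfa : ContinuousAt f (z + t • c • w) := hfc.continuousAt (hVopen.mem_nhds ht1)
    have hle : 𝓝[D] z ×ˢ 𝓝[ball (0 : ℂ) (1 / 2)] t ≤ 𝓝 (z, t) := by
      rw [nhds_prod_eq]
      exact prod_mono nhdsWithin_le_nhds nhdsWithin_le_nhds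
    have h1 : ContinuousAt (fun p : EuclideanSpace ℂ (Fin d) × ℂ => f (z + p.2 • c • w)) (z, t) :=
      ContinuousAt.comp (g := f) hfa (by fun_prop)
    have h2 : ContinuousAt (fun p : EuclideanSpace ℂ (Fin d) × ℂ => f (p.1 + p.2 • c • w)) (z, t) :=
      ContinuousAt.comp (g := f) hfa (by fun_prop)
    have h3 := (h1.prodMk h2).tendsto.mono_left hle
    exact h3.mono_right (nhds_le_uniformity _)
  have hslice := hlim.differentiableOn ?_ isOpen_ball
  · have h1 : DifferentiableAt ℂ (fun t : ℂ => f (z + t • c • w)) (c⁻¹ * 0) := by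
      rw [mul_zero]
      exact hslice.differentiableAt (ball_mem_nhds _ (by norm_num))
    have h2 := DifferentiableAt.comp (f := fun t : ℂ => c⁻¹ * t) (0 : ℂ) h1 (by fun_prop)
    refine h2.congr_of_eventuallyEq (Eventually.of_forall fun t => ?_)
    simp only [Function.comp_apply, smul_smul]
    congr 3
    field_simp
  · filter_upwards [self_mem_nhdsWithin, nhdsWithin_le_nhds (isOpen_ball.mem_nhds hzb)] with v
      hvD hvb
    exact differentiableOn_slice hUopen hφholo hφsurj hφproper hSopen hJS hfc hfd
      (hdisc v hvb) hvD
end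

section
/- Let σ : ℂ^d → ℂ^d be an affine-linear involution (σ(z) = A z + B, σ∘σ = id), let U, V be domains in ℂ^d with σ(U) ⊆ U, and let φ : U → V be an admissible holomorphic surjection (the fiber over every point of φ(Z(J_φ)) is a singleton) satisfying φ(σ(z)) = φ(z) for all z ∈ U. Then Z(J_φ) ⊆ {z ∈ U : σ(z) = z}. If moreover J_σ := det A = −1, then Z(J_φ) = {z ∈ U : σ(z) = z}. -/
/-!
If `J_φ` vanishes at `z`, then `z` and `σ z` lie in the same fiber of `φ`, over a point of
`φ(Z(J_φ))`; that fiber is a singleton, so `σ z = z`. Conversely, differentiating `φ ∘ σ = φ`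
at a fixed point `z` of `σ` gives `Dφ(z) ∘ A = Dφ(z)`, hence `J_φ(z) · det A = J_φ(z)`, and
`det A = -1` forces `J_φ(z) = 0`.
-/

/-- For an affine-linear involution `σ` and a `σ`-invariant
admissible holomorphic surjection `φ : U → V`, one has `Z(J_φ) ⊆ Fix(σ)`;
if moreover `J_σ = det A = -1`, then `Z(J_φ) = Fix(σ)`. -/
theorem stmt_6 (d : ℕ) (hd : 1 ≤ d)
    (σ : EuclideanSpace ℂ (Fin d) → EuclideanSpace ℂ (Fin d))
    (A : EuclideanSpace ℂ (Fin d) →ₗ[ℂ] EuclideanSpace ℂ (Fin d))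
    (B : EuclideanSpace ℂ (Fin d))
    (hσ : ∀ z, σ z = A z + B)
    (hσinv : ∀ z, σ (σ z) = z)
    (U V : Set (EuclideanSpace ℂ (Fin d)))
    (hUopen : IsOpen U) (hUconn : IsConnected U)
    (hVopen : IsOpen V) (hVconn : IsConnected V)
    (hUinv : σ '' U ⊆ U)
    (φ : EuclideanSpace ℂ (Fin d) → EuclideanSpace ℂ (Fin d))
    (hφholo : DifferentiableOn ℂ φ U)
    (hφmaps : Set.MapsTo φ U V)
    (hφsurj : φ '' U = V)
    (hadm : ∀ v ∈ φ '' {z ∈ U | (fderiv ℂ φ z).det = 0},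
      ∃! x, x ∈ U ∧ φ x = v)
    (hφσ : ∀ z ∈ U, φ (σ z) = φ z) :
    {z ∈ U | (fderiv ℂ φ z).det = 0} ⊆ {z ∈ U | σ z = z} ∧
    (LinearMap.det A = -1 →
      {z ∈ U | (fderiv ℂ φ z).det = 0} = {z ∈ U | σ z = z}) := by
  have hsub : {z ∈ U | (fderiv ℂ φ z).det = 0} ⊆ {z ∈ U | σ z = z} := by
    rintro z ⟨hzU, hz⟩
    refine ⟨hzU, ?_⟩
    exact (hadm (φ z) ⟨z, ⟨hzU, hz⟩, rfl⟩).unique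
      ⟨hUinv ⟨z, hzU, rfl⟩, hφσ z hzU⟩ ⟨hzU, rfl⟩
  refine ⟨hsub, fun hdet => hsub.antisymm ?_⟩
  rintro z ⟨hzU, hz⟩
  refine ⟨hzU, ?_⟩
  have hφz : HasFDerivAt φ (fderiv ℂ φ z) z :=
    (hφholo.differentiableAt (hUopen.mem_nhds hzU)).hasFDerivAt
  have hσz : HasFDerivAt σ (LinearMap.toContinuousLinearMap A) z := by
    have h := (LinearMap.toContinuousLinearMap A).hasFDerivAt (x := z) |>.add_const B
    exact h.congr_of_eventuallyEq (Filter.Eventually.of_forall fun w => by simp [hσ w])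
  have hcomp : HasFDerivAt (φ ∘ σ)
      ((fderiv ℂ φ z).comp (LinearMap.toContinuousLinearMap A)) z :=
    HasFDerivAt.comp z (by rw [hz]; exact hφz) hσz
  have hcongr : φ ∘ σ =ᶠ[nhds z] φ :=
    Filter.eventuallyEq_of_mem (hUopen.mem_nhds hzU) hφσ
  have heq : (fderiv ℂ φ z).comp (LinearMap.toContinuousLinearMap A) = fderiv ℂ φ z :=
    hcomp.unique (hφz.congr_of_eventuallyEq hcongr)
  have hJ : LinearMap.det (fderiv ℂ φ z).toLinearMap * LinearMap.det A
      = LinearMap.det (fderiv ℂ φ z).toLinearMap := by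
    rw [← LinearMap.det_comp]
    exact congrArg (fun L : EuclideanSpace ℂ (Fin d) →L[ℂ] EuclideanSpace ℂ (Fin d) =>
      LinearMap.det L.toLinearMap) heq
  rw [hdet, mul_neg_one] at hJ
  exact self_eq_neg.mp hJ.symm
end

section
/- (Waring–Lagrange theorem for σ-invariant holomorphic functions.) Let σ : ℂ^d → ℂ^d be an affine-linear involution with J_σ = −1, let U, V be domains in ℂ^d, and let φ : U → V be a σ-invariant 2-proper holomorphic map (σ(U) ⊆ U and φ∘σ = φ on U). Then for a function g holomorphic on U, one has g(σ(z)) = g(z) for all z ∈ U if and only if there exists a function f holomorphic on V with g(z) = f(φ(z)) for all z ∈ U. -/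
/-!
The factor `f` is forced: `f (φ z) = g z`. The content of the theorem is that `f` is well defined
and holomorphic.

*Fibers are `σ`-orbits.* At a fixed point of `σ`, differentiating `φ ∘ σ = φ` gives
`J_φ · det A = J_φ`, so `J_φ = 0`. Hence a two-point fiber through a regular point `z` is
`{z, σ z}`, while a one-point fiber is a fixed point of `σ`. So a `σ`-invariant `g` descends to `f`
on `V`, and all critical points of `φ` lie in the fixed set of `σ`.

*Continuity, and holomorphy at regular values.* A proper surjection is a quotient map, so `f` is
continuous (`isQuotientMap_restrict`). As the fibers are orbits, `φ` is also open
(`nhds_le_map_of_orbit_fibers`), and the derivative of `f` at a regular value can be read off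
through `φ` (`differentiableAt_of_comp_eventuallyEq`).

*Removing the critical values `C`.* The critical points lie in the proper affine subspace of fixed
points of `σ`, onto which `p z = (z + σ z) / 2` projects. For a direction `h`, Sard's lemma applied
to `Ψ z = φ (p z) + ℓ (z - p z) • h` shows that for a dense set of `y` the complex line `y + ℂ h`
meets `C` in a countable set (`dense_countable_slices`). On such lines `f` is holomorphic, since
countable sets are removable for continuous functions of one variable; on every other line it is
then holomorphic as a locally uniform limit. The directional derivatives of `f` thus exist and are
continuous on `V`; they are linear in the direction off `C`, hence everywhere by density, and so `f`
is differentiable (`differentiableOn_of_countable_slices`).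
-/

section Auxiliary
open Filter Topology Set Metric
open scoped NNReal

/-! ### Removable singularities via complex lines -/

section Removable
variable {E : Type*} [NormedAddCommGroup E] [NormedSpace ℂ E]

/-- Restrictions of a continuous `f` to parallel complex lines depend continuously on the base
point. -/
theorem tendstoLocallyUniformlyOn_slice {f : E → ℂ} {V : Set E} (hV : IsOpen V)
    (hfc : ContinuousOn f V) {x h : E} {O : Set ℂ} (hO : ∀ ζ ∈ O, x + ζ • h ∈ V) :
    TendstoLocallyUniformlyOn (fun (y : E) (ζ : ℂ) => f (y + ζ • h)) (fun ζ => f (x + ζ • h))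
      (𝓝 x) O := by
  rw [tendstoLocallyUniformlyOn_iff_forall_tendsto]
  intro ζ hζ
  have hc : ContinuousAt f (x + ζ • h) := hfc.continuousAt (hV.mem_nhds (hO ζ hζ))
  have h1 : Tendsto (fun p : E × ℂ => (f (x + p.2 • h), f (p.1 + p.2 • h))) (𝓝 (x, ζ))
      (𝓝 (f (x + ζ • h), f (x + ζ • h))) := by
    refine Tendsto.prodMk_nhds ?_ ?_
    · exact Tendsto.comp hc (Continuous.tendsto' (by fun_prop) _ _ rfl)
    · exact Tendsto.comp hc (Continuous.tendsto' (by fun_prop) _ _ rfl)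
  refine (h1.mono_left ?_).mono_right (nhds_le_uniformity _)
  rw [nhds_prod_eq]
  exact Filter.prod_mono le_rfl nhdsWithin_le_nhds

/-- Discs in direction `h` of a common radius, centred near `x`, stay inside `V`. -/
theorem exists_slice_radius {V : Set E} (hV : IsOpen V) {x : E} (hx : x ∈ V) (h : E) :
    ∃ δ : ℝ≥0, 0 < δ ∧ ∀ᶠ y in 𝓝 x, ∀ ζ ∈ closedBall (0 : ℂ) δ, y + ζ • h ∈ V := by
  have hc : Tendsto (fun p : E × ℂ => p.1 + p.2 • h) (𝓝 x ×ˢ 𝓝 0) (𝓝 x) := by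
    rw [← nhds_prod_eq]
    exact Continuous.tendsto' (by fun_prop) _ _ (by simp)
  have h1 := hc.eventually (hV.mem_nhds hx)
  rw [(Filter.basis_sets _).prod nhds_basis_closedBall |>.eventually_iff] at h1
  obtain ⟨⟨N, δ⟩, ⟨hN, hδ⟩, hs⟩ := h1
  refine ⟨⟨δ, hδ.le⟩, hδ, ?_⟩
  filter_upwards [hN] with y hy ζ hζ
  exact hs (mk_mem_prod hy hζ)

/-- If the lines in direction `h` that meet the exceptional set `C` countably often have dense base
points, then `f` is holomorphic along every disc in direction `h`: on those lines by the
one-variable removability of countable sets, on the others as a locally uniform limit. -/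
theorem differentiableOn_slice_s7 {f : E → ℂ} {V C : Set E} (hV : IsOpen V)
    (hfc : ContinuousOn f V) (hfd : ∀ v ∈ V, v ∉ C → DifferentiableAt ℂ f v) {h : E}
    (hslice : Dense {y : E | {ζ : ℂ | y + ζ • h ∈ C}.Countable})
    {x : E} {δ : ℝ≥0} (hδ : 0 < δ)
    (hx : ∀ᶠ y in 𝓝 x, ∀ ζ ∈ closedBall (0 : ℂ) δ, y + ζ • h ∈ V) :
    DifferentiableOn ℂ (fun ζ : ℂ => f (x + ζ • h)) (ball 0 δ) := by
  set G := {y : E | {ζ : ℂ | y + ζ • h ∈ C}.Countable}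
  have : (𝓝[G] x).NeBot := mem_closure_iff_nhdsWithin_neBot.1 (hslice x)
  have hconv := tendstoLocallyUniformlyOn_slice hV hfc (x := x) (h := h) (O := ball 0 δ)
    (fun ζ hζ => hx.self_of_nhds ζ (ball_subset_closedBall hζ))
  have hconv' : TendstoLocallyUniformlyOn (fun (y : E) (ζ : ℂ) => f (y + ζ • h))
      (fun ζ => f (x + ζ • h)) (𝓝[G] x) (ball 0 δ) := by
    rw [tendstoLocallyUniformlyOn_iff_forall_tendsto] at hconv ⊢
    exact fun ζ hζ => (hconv ζ hζ).mono_left (Filter.prod_mono nhdsWithin_le_nhds le_rfl)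
  refine hconv'.differentiableOn ?_ isOpen_ball
  filter_upwards [nhdsWithin_le_nhds hx, self_mem_nhdsWithin] with y hy hyG
  have hline : Differentiable ℂ (fun ζ : ℂ => y + ζ • h) := by fun_prop
  have hps := Complex.hasFPowerSeriesOnBall_of_differentiable_off_countable (c := (0 : ℂ))
    (f := fun ζ : ℂ => f (y + ζ • h)) (s := {ζ : ℂ | y + ζ • h ∈ C}) hyG
    (hfc.comp hline.continuous.continuousOn hy)
    (fun ζ hζ => (hfd _ (hy ζ (ball_subset_closedBall hζ.1)) hζ.2).comp ζ hline.differentiableAt)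
    hδ
  have := hps.differentiableOn
  rwa [Metric.eball_coe] at this

/-- Line derivatives that are linear in the direction and continuous in the base point form a
Fréchet derivative, by the mean value inequality on segments. -/
theorem hasFDerivAt_of_continuous_lineDeriv {f : E → ℂ} {V : Set E} (hV : IsOpen V)
    {L : E → E →L[ℂ] ℂ} (hL : ∀ y ∈ V, ∀ h, HasLineDerivAt ℂ f (L y h) y h)
    (hLc : ContinuousOn L V) {x : E} (hx : x ∈ V) : HasFDerivAt f (L x) x := by
  rw [hasFDerivAt_iff_isLittleO, Asymptotics.isLittleO_iff]
  intro ε hε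
  have h1 : ∀ᶠ y in 𝓝 x, y ∈ V ∧ ‖L y - L x‖ < ε := by
    refine (hV.eventually_mem hx).and ?_
    have := (hLc.continuousAt (hV.mem_nhds hx)).eventually (Metric.ball_mem_nhds _ hε)
    filter_upwards [this] with y hy
    rwa [← dist_eq_norm]
  obtain ⟨r, hr, hball⟩ := Metric.eventually_nhds_iff_ball.1 h1
  filter_upwards [ball_mem_nhds x hr] with y hy
  set h := y - x with hh
  have hmem : ∀ t ∈ Icc (0 : ℝ) 1, x + (t : ℂ) • h ∈ ball x r := by
    intro t ht
    rw [mem_ball_iff_norm] at hy ⊢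
    rw [add_sub_cancel_left, norm_smul, Complex.norm_real, Real.norm_of_nonneg ht.1]
    exact (mul_le_of_le_one_left (norm_nonneg _) ht.2).trans_lt hy
  have hder : ∀ t ∈ Icc (0 : ℝ) 1, HasDerivAt (fun t : ℝ => f (x + (t : ℂ) • h) - (t : ℂ) * L x h)
      (L (x + (t : ℂ) • h) h - L x h) t := by
    intro t ht
    have h2 : HasDerivAt (fun s : ℂ => f (x + (t : ℂ) • h + s • h)) (L (x + (t : ℂ) • h) h)
      ((t : ℂ) - t) := by
      rw [sub_self]; exact hL _ (hball _ (hmem t ht)).1 h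
    have h3 := (h2.comp_sub_const (t : ℂ) (t : ℂ)).comp_ofReal
    have h4 := ((hasDerivAt_id (t : ℂ)).mul_const (L x h)).comp_ofReal
    rw [one_mul] at h4
    refine (h3.sub h4).congr_of_eventuallyEq (Eventually.of_forall fun s => ?_)
    simp [sub_smul, add_assoc]
  have := norm_image_sub_le_of_norm_deriv_le_segment_01'
    (fun t ht => (hder t ht).hasDerivWithinAt) (C := ε * ‖h‖) (fun t ht => by
      rw [← sub_apply]
      exact (ContinuousLinearMap.le_opNorm _ _).trans (mul_le_mul_of_nonneg_right
        (hball _ (hmem t ⟨ht.1, ht.2.le⟩)).2.le (norm_nonneg _)))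
  simp only [Complex.ofReal_one, one_smul, Complex.ofReal_zero, zero_smul, add_zero, one_mul,
    zero_mul, sub_zero] at this
  rw [show x + h = y by simp [hh]] at this
  rwa [sub_right_comm]

variable [FiniteDimensional ℂ E]

/-- Removability: a continuous `f` that is holomorphic off `C` is holomorphic, provided that `C` has
dense complement and that, in each direction, densely many complex lines meet `C` countably
often. -/
theorem differentiableOn_of_countable_slices {f : E → ℂ} {V C : Set E} (hV : IsOpen V)
    (hfc : ContinuousOn f V) (hfd : ∀ v ∈ V, v ∉ C → DifferentiableAt ℂ f v)
    (hC : Dense Cᶜ)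
    (hslice : ∀ h : E, Dense {y : E | {ζ : ℂ | y + ζ • h ∈ C}.Countable}) :
    DifferentiableOn ℂ f V := by
  have hline : ∀ x ∈ V, ∀ h, LineDifferentiableAt ℂ f x h := by
    intro x hx h
    obtain ⟨δ, hδ, hδV⟩ := exists_slice_radius hV hx h
    exact (differentiableOn_slice_s7 hV hfc hfd (hslice h) hδ hδV).differentiableAt
      (ball_mem_nhds _ hδ)
  have hcont : ∀ h, ContinuousOn (fun x => lineDeriv ℂ f x h) V := by
    intro h x hx
    obtain ⟨δ, hδ, hδV⟩ := exists_slice_radius hV hx h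
    have hconv := tendstoLocallyUniformlyOn_slice hV hfc (x := x) (h := h) (O := ball 0 δ)
      (fun ζ hζ => hδV.self_of_nhds ζ (ball_subset_closedBall hζ))
    have := hconv.deriv (by
      filter_upwards [hδV.eventually_nhds] with y hy
      exact differentiableOn_slice_s7 hV hfc hfd (hslice h) hδ hy) isOpen_ball
    exact (this.tendsto_at (mem_ball_self hδ)).mono_left nhdsWithin_le_nhds
  have hadd : ∀ x ∈ V, ∀ h k, lineDeriv ℂ f x (h + k) = lineDeriv ℂ f x h + lineDeriv ℂ f x k := by
    intro x hx h k
    have : (𝓝[Cᶜ] x).NeBot := mem_closure_iff_nhdsWithin_neBot.1 (hC x)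
    have ht : ∀ h, Tendsto (fun x => lineDeriv ℂ f x h) (𝓝[Cᶜ] x) (𝓝 (lineDeriv ℂ f x h)) :=
      fun h => ((hcont h).continuousAt (hV.mem_nhds hx)).mono_left nhdsWithin_le_nhds
    refine tendsto_nhds_unique_of_eventuallyEq (ht (h + k)) ((ht h).add (ht k)) ?_
    filter_upwards [nhdsWithin_le_nhds (hV.mem_nhds hx), self_mem_nhdsWithin] with y hy hyC
    have hd := hfd y hy hyC
    simp only [hd.lineDeriv_eq_fderiv, map_add]
  have hex : ∀ x, ∃ L : E →L[ℂ] ℂ, x ∈ V → ∀ h, L h = lineDeriv ℂ f x h := by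
    intro x
    by_cases hx : x ∈ V
    · let L : E →ₗ[ℂ] ℂ :=
        { toFun := fun h => lineDeriv ℂ f x h
          map_add' := hadd x hx
          map_smul' := fun c h => lineDeriv_smul }
      exact ⟨L.toContinuousLinearMap, fun _ h => rfl⟩
    · exact ⟨0, fun h => absurd h hx⟩
  choose L hL using hex
  have hLc : ContinuousOn L V := continuousOn_clm_apply.2 fun h =>
    (hcont h).congr fun x hx => hL x hx h
  intro x hx
  refine (hasFDerivAt_of_continuous_lineDeriv hV (fun y hy h => ?_) hLc
    hx).differentiableAt.differentiableWithinAt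
  rw [hL y hy]
  exact (hline y hy h).hasLineDerivAt

/-! ### Critical values on complex lines, and regular values -/

/-- Sard's lemma: the image of a set of critical points has dense complement, being Lebesgue
null. -/
theorem dense_compl_image_of_det_eq_zero {f : E → E} {s : Set E}
    (hf : ∀ z ∈ s, DifferentiableAt ℂ f z) (hdet : ∀ z ∈ s, (fderiv ℂ f z).det = 0) :
    Dense (f '' s)ᶜ := by
  let _ : MeasurableSpace E := borel E
  have : BorelSpace E := ⟨rfl⟩
  have : FiniteDimensional ℝ E := FiniteDimensional.complexToReal E
  have h0 : (MeasureTheory.Measure.addHaar : MeasureTheory.Measure E) (f '' s) = 0 := by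
    refine MeasureTheory.addHaar_image_eq_zero_of_det_fderivWithin_eq_zero _
      (f' := fun z => (fderiv ℂ f z).restrictScalars ℝ)
      (fun z hz => ((hf z hz).hasFDerivAt.restrictScalars ℝ).hasFDerivWithinAt) (fun z hz => ?_)
    have h1 : LinearMap.det (fderiv ℂ f z : E →ₗ[ℂ] E) = 0 := hdet z hz
    change LinearMap.det ((fderiv ℂ f z : E →ₗ[ℂ] E).restrictScalars ℝ) = 0
    rw [LinearMap.det_restrictScalars, h1, Algebra.norm_zero]
  exact MeasureTheory.Measure.dense_of_ae (MeasureTheory.compl_mem_ae_iff.2 h0)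

theorem exists_antilipschitz_of_det_ne_zero {L : E →L[ℂ] E} (h : L.det ≠ 0) :
    ∃ K, AntilipschitzWith K L :=
  ⟨_, (L.toContinuousLinearEquivOfDetNeZero h).antilipschitz⟩

/-- A fiber consisting of regular points is discrete, hence countable. -/
theorem countable_fiber_of_det_ne_zero {f : E → E} {s : Set E} {y : E}
    (hf : ∀ z ∈ s, DifferentiableAt ℂ f z)
    (hdet : ∀ z ∈ s, f z = y → (fderiv ℂ f z).det ≠ 0) :
    {z ∈ s | f z = y}.Countable := by
  have : ProperSpace E := FiniteDimensional.proper ℂ E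
  refine (HereditarilyLindelofSpace.isLindelof _).countable_of_isDiscrete
    (IsDiscrete.of_nhdsWithin fun z hz => ?_)
  have h := (hf z hz.1).hasFDerivAt.eventually_ne (c := y)
    (exists_antilipschitz_of_det_ne_zero (hdet z hz.1 hz.2))
  rw [eventually_nhdsWithin_iff] at h
  rw [le_pure_iff, mem_nhdsWithin_iff_eventually]
  filter_upwards [h] with w hw hws
  by_contra hne
  exact hw hne hws.2

/-- Let `p` be a holomorphic map that is constant along a direction `n ≠ 0` and restricts to the
identity on `Z`. Then in each direction `h`, densely many complex lines meet `φ '' Z` countably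
often. -/
theorem dense_countable_slices {φ p : E → E} {U Z : Set E} (hU : IsOpen U)
    (hφ : DifferentiableOn ℂ φ U) (hp : Differentiable ℂ p) {n : E} (hn : n ≠ 0)
    (hpn : ∀ (z : E) (ζ : ℂ), p (z + ζ • n) = p z) (hZU : Z ⊆ U) (hpZ : ∀ z ∈ Z, p z = z)
    (h : E) : Dense {y : E | {ζ : ℂ | y + ζ • h ∈ φ '' Z}.Countable} := by
  obtain ⟨ℓ, hℓ⟩ := SeparatingDual.exists_eq_one (R := ℂ) hn
  set Ψ : E → E := fun z => φ (p z) + ℓ (z - p z) • h with hΨ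
  have hΨd : ∀ z ∈ p ⁻¹' U, DifferentiableAt ℂ Ψ z := by
    intro z hz
    have h1 : DifferentiableAt ℂ (fun z => φ (p z)) z :=
      (hφ.differentiableAt (hU.mem_nhds hz)).comp z (hp z)
    have h2 : Differentiable ℂ (fun z => ℓ (z - p z) • h) := by fun_prop
    exact h1.add (h2 z)
  refine (dense_compl_image_of_det_eq_zero (f := Ψ)
    (s := {z ∈ p ⁻¹' U | (fderiv ℂ Ψ z).det = 0}) (fun z hz => hΨd z hz.1)
    (fun z hz => hz.2)).mono fun y hy => ?_
  have hcount := countable_fiber_of_det_ne_zero (y := y) hΨd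
    (fun z hz hzy hdet => hy ⟨z, ⟨hz, hdet⟩, hzy⟩)
  -- If `y + ζ h = φ w` with `w ∈ Z`, then `w - ζ n` lies in the fiber of `Ψ` over `y`, and `ζ` is
  -- recovered from it through `ℓ`.
  refine (hcount.image fun z => -ℓ (z - p z)).mono ?_
  rintro ζ ⟨w, hw, hwy⟩
  have hpz : p (w + (-ζ) • n) = w := by rw [hpn, hpZ w hw]
  have hℓz : ℓ (w + (-ζ) • n - p (w + (-ζ) • n)) = -ζ := by
    rw [hpz, add_sub_cancel_left, map_smul, hℓ, smul_eq_mul, mul_one]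
  refine ⟨w + (-ζ) • n, ⟨?_, ?_⟩, ?_⟩
  · change p _ ∈ U
    rw [hpz]; exact hZU hw
  · simp only [hΨ]
    rw [hℓz, hpz, hwy, neg_smul, add_neg_cancel_right]
  · simp only []
    rw [hℓz, neg_neg]

/-- If `f ∘ φ` is differentiable at a regular point `z` of `φ`, and `φ` is open at `z`, then `f` is
differentiable at `φ z`. No local inverse is needed: `w - z = O(φ w - φ z)` transports the
little-o estimate for `f ∘ φ` to one for `f`. -/
theorem differentiableAt_of_comp_eventuallyEq {φ : E → E} {f g : E → ℂ} {z : E}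
    (hφ : DifferentiableAt ℂ φ z) (hdet : (fderiv ℂ φ z).det ≠ 0)
    (hg : DifferentiableAt ℂ g z) (hfg : ∀ᶠ w in 𝓝 z, g w = f (φ w))
    (hopen : 𝓝 (φ z) ≤ map φ (𝓝 z)) : DifferentiableAt ℂ f (φ z) := by
  set e := (fderiv ℂ φ z).toContinuousLinearEquivOfDetNeZero hdet with he
  have hee : ∀ w, e w = fderiv ℂ φ z w := fun w => rfl
  set L : E →L[ℂ] ℂ := (fderiv ℂ g z).comp (e.symm : E →L[ℂ] E) with hL
  have hLe : ∀ w, L (fderiv ℂ φ z w) = fderiv ℂ g z w := by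
    intro w
    rw [← hee]
    simp [hL]
  have hind : IsInducing (fderiv ℂ φ z) := e.toHomeomorph.isInducing
  have hrev : (fun w => w - z) =O[𝓝 z] fun w => φ w - φ z :=
    (hφ.hasFDerivAt.isTheta_sub hind).isBigO_symm
  have h1 := hg.hasFDerivAt.isLittleO
  have h2 := (L.isBigO_comp (fun w => φ w - φ z - fderiv ℂ φ z (w - z)) (𝓝 z)).trans_isLittleO
    hφ.hasFDerivAt.isLittleO
  have h3 := (h1.sub h2).trans_isBigO hrev
  refine HasFDerivAt.differentiableAt (f' := L) ?_
  rw [hasFDerivAt_iff_isLittleO]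
  refine Asymptotics.IsLittleO.mono ?_ hopen
  rw [Asymptotics.isLittleO_map]
  refine h3.congr' ?_ EventuallyEq.rfl
  filter_upwards [hfg] with w hw
  simp only [Function.comp_apply]
  rw [← hw, ← hfg.self_of_nhds, map_sub L, hLe]
  ring

end Removable

/-! ### Proper maps with orbit fibers -/

section Quotient
variable {X Y : Type*} [TopologicalSpace X] [TopologicalSpace Y]

/-- A proper continuous surjection `U → V` is closed, hence a quotient map. -/
theorem isQuotientMap_restrict [T2Space Y] {U : Set X} {V : Set Y} [CompactlyCoherentSpace V]
    {φ : X → Y} (hφ : ContinuousOn φ U) (hmaps : MapsTo φ U V) (hsurj : φ '' U = V)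
    (hproper : ∀ K ⊆ V, IsCompact K → IsCompact {z ∈ U | φ z ∈ K}) :
    IsQuotientMap (hmaps.restrict φ U V) := by
  have hc : Continuous (hmaps.restrict φ U V) := hφ.mapsToRestrict hmaps
  have hp : IsProperMap (hmaps.restrict φ U V) := by
    refine isProperMap_iff_isCompact_preimage.2 ⟨hc, fun K hK => ?_⟩
    rw [Subtype.isCompact_iff]
    convert! hproper (Subtype.val '' K) (by simp) (hK.image continuous_subtype_val) using 1
    ext z
    constructor
    · rintro ⟨u, hu, rfl⟩
      exact ⟨u.2, _, hu, rfl⟩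
    · rintro ⟨hz, v, hv, hvz⟩
      refine ⟨⟨z, hz⟩, ?_, rfl⟩
      have : hmaps.restrict φ U V ⟨z, hz⟩ = v := Subtype.ext hvz.symm
      rwa [mem_preimage, this]
  refine hp.isClosedMap.isQuotientMap hc ?_
  rintro ⟨v, hv⟩
  obtain ⟨z, hz, rfl⟩ := hsurj.symm ▸ hv
  exact ⟨⟨z, hz⟩, rfl⟩

/-- A quotient map whose fibers are contained in `σ`-orbits is open, because the saturation of an
open `N` is `N ∪ σ⁻¹ N`. -/
theorem nhds_le_map_of_orbit_fibers {U : Set X} {V : Set Y} {φ : X → Y} {σ : X → X}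
    (hU : IsOpen U) (hV : IsOpen V) (hmaps : MapsTo φ U V)
    (hq : IsQuotientMap (hmaps.restrict φ U V)) (hσ : Continuous σ)
    (hφσ : ∀ z ∈ U, φ (σ z) = φ z)
    (hfib : ∀ z ∈ U, ∀ w ∈ U, φ z = φ w → w = z ∨ w = σ z) {z : X} (hz : z ∈ U) :
    𝓝 (φ z) ≤ map φ (𝓝 z) := by
  intro S hS
  obtain ⟨N, hNS, hNo, hzN⟩ := mem_nhds_iff.1 (inter_mem (mem_map.1 hS) (hU.mem_nhds hz))
  have hopen : IsOpen ((Subtype.val : V → Y) ⁻¹' (φ '' N)) := by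
    rw [← hq.isOpen_preimage]
    have : hmaps.restrict φ U V ⁻¹' ((Subtype.val : V → Y) ⁻¹' (φ '' N)) =
        {u : U | (u : X) ∈ N ∨ σ u ∈ N} := by
      ext u
      constructor
      · rintro ⟨w, hw, hwu⟩
        rcases hfib u u.2 w (hNS hw).2 hwu.symm with h | h
        · exact Or.inl (h ▸ hw)
        · exact Or.inr (h ▸ hw)
      · rintro (h | h)
        · exact ⟨u, h, rfl⟩
        · exact ⟨σ u, h, hφσ u u.2⟩
    rw [this]
    exact (hNo.preimage continuous_subtype_val).union
      (hNo.preimage (hσ.comp continuous_subtype_val))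
  have h2 : IsOpen (φ '' N) := by
    have h3 := hV.isOpenMap_subtype_val _ hopen
    rwa [Subtype.image_preimage_coe, inter_eq_right.2] at h3
    rintro _ ⟨w, hw, rfl⟩
    exact hmaps (hNS hw).2
  refine mem_of_superset (h2.mem_nhds ⟨z, hzN, rfl⟩) ?_
  rintro _ ⟨w, hw, rfl⟩
  exact (hNS hw).1

end Quotient

end Auxiliary

/-! ### Factorization of invariant functions -/

/-- Waring–Lagrange for σ-invariant holomorphic functions:
for a σ-invariant 2-proper holomorphic map `φ : U → V` (σ an affine-linear
involution with `J_σ = -1`), a holomorphic `g` on `U` is σ-invariant iff it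
factors holomorphically through `φ`. -/
theorem stmt_7 (d : ℕ) (hd : 1 ≤ d)
    (σ : EuclideanSpace ℂ (Fin d) → EuclideanSpace ℂ (Fin d))
    (A : EuclideanSpace ℂ (Fin d) →ₗ[ℂ] EuclideanSpace ℂ (Fin d))
    (B : EuclideanSpace ℂ (Fin d))
    (hσ : ∀ z, σ z = A z + B)
    (hσinv : ∀ z, σ (σ z) = z)
    (hdetA : LinearMap.det A = -1)
    (U V : Set (EuclideanSpace ℂ (Fin d)))
    (hUopen : IsOpen U) (hUconn : IsConnected U)
    (hVopen : IsOpen V) (hVconn : IsConnected V)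
    (hUinv : σ '' U ⊆ U)
    (φ : EuclideanSpace ℂ (Fin d) → EuclideanSpace ℂ (Fin d))
    (hφholo : DifferentiableOn ℂ φ U)
    (hφmaps : Set.MapsTo φ U V)
    (hφsurj : φ '' U = V)
    (hφproper : ∀ K : Set (EuclideanSpace ℂ (Fin d)), K ⊆ V → IsCompact K →
      IsCompact {z ∈ U | φ z ∈ K})
    (hfib2 : ∀ v ∈ V \ (φ '' {z ∈ U | (fderiv ℂ φ z).det = 0}),
      Nat.card {z ∈ U | φ z = v} = 2)
    (hfib1 : ∀ v ∈ φ '' {z ∈ U | (fderiv ℂ φ z).det = 0},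
      Nat.card {z ∈ U | φ z = v} = 1)
    (hφσ : ∀ z ∈ U, φ (σ z) = φ z)
    (g : EuclideanSpace ℂ (Fin d) → ℂ)
    (hg : DifferentiableOn ℂ g U) :
    (∀ z ∈ U, g (σ z) = g z) ↔
    (∃ f : EuclideanSpace ℂ (Fin d) → ℂ,
      DifferentiableOn ℂ f V ∧ ∀ z ∈ U, g z = f (φ z)) := by
  have hUσ : ∀ z ∈ U, σ z ∈ U := fun z hz => hUinv ⟨z, hz, rfl⟩
  constructor
  swap
  · rintro ⟨f, -, hf⟩ z hz
    rw [hf _ (hUσ z hz), hφσ z hz, hf z hz]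
  intro hgσ
  have hAc : Continuous A := LinearMap.continuous_of_finiteDimensional A
  have hσc : Continuous σ := by
    rw [funext hσ]; exact hAc.add continuous_const
  have hσd : ∀ z, HasFDerivAt σ A.toContinuousLinearMap z := by
    intro z
    rw [funext hσ]
    exact A.toContinuousLinearMap.hasFDerivAt.add_const B
  have hφd : ∀ z ∈ U, DifferentiableAt ℂ φ z := fun z hz =>
    hφholo.differentiableAt (hUopen.mem_nhds hz)
  have hfix : ∀ z ∈ U, σ z = z → (fderiv ℂ φ z).det = 0 := by
    intro z hz hσz
    have h1 : HasFDerivAt φ (fderiv ℂ φ z) (σ z) := by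
      rw [hσz]; exact (hφd z hz).hasFDerivAt
    have h2 := (h1.comp z (hσd z)).congr_of_eventuallyEq (f₁ := φ) (by
      filter_upwards [hUopen.mem_nhds hz] with w hw
      exact (hφσ w hw).symm)
    have h3 := congrArg ContinuousLinearMap.det h2.fderiv
    have h4 : ((fderiv ℂ φ z).comp A.toContinuousLinearMap).det
        = (fderiv ℂ φ z).det * LinearMap.det A :=
      LinearMap.det_comp _ _
    rw [h4, hdetA] at h3
    exact self_eq_neg.1 (h3.trans (mul_neg_one _))
  have hcrit : ∀ z ∈ U, (fderiv ℂ φ z).det = 0 → ∀ w ∈ U, φ z = φ w → w = z := by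
    intro z hz hdet w hw hzw
    have h1 := hfib1 (φ z) ⟨z, ⟨hz, hdet⟩, rfl⟩
    have h2 := (Nat.card_eq_one_iff_unique.1 h1).1
    exact congrArg Subtype.val
      (h2.elim (⟨w, hw, hzw.symm⟩ : {x // x ∈ {x | x ∈ U ∧ φ x = φ z}}) ⟨z, hz, rfl⟩)
  have hfib : ∀ z ∈ U, ∀ w ∈ U, φ z = φ w → w = z ∨ w = σ z := by
    intro z hz w hw hzw
    by_cases hdet : (fderiv ℂ φ z).det = 0
    · exact Or.inl (hcrit z hz hdet w hw hzw)
    have hreg : φ z ∈ V \ (φ '' {z ∈ U | (fderiv ℂ φ z).det = 0}) := by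
      refine ⟨hφmaps hz, ?_⟩
      rintro ⟨u, ⟨hu, hudet⟩, huz⟩
      exact hdet (hcrit u hu hudet z hz huz ▸ hudet)
    have h2 : Set.ncard {x | x ∈ U ∧ φ x = φ z} = 2 := hfib2 _ hreg
    have hσz : σ z ≠ z := fun h => hdet (hfix z hz h)
    have hsub : ({z, σ z} : Set _) ⊆ {x | x ∈ U ∧ φ x = φ z} := by
      rintro x (rfl | rfl)
      · exact ⟨hz, rfl⟩
      · exact ⟨hUσ z hz, hφσ z hz⟩
    have heq := Set.eq_of_subset_of_ncard_le hsub
      (by rw [h2, Set.ncard_pair hσz.symm]) (Set.finite_of_ncard_ne_zero (by rw [h2]; norm_num))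
    have hwm : w ∈ ({z, σ z} : Set _) := heq ▸ ⟨hw, hzw.symm⟩
    exact hwm
  -- Critical points of `φ` are fixed by `σ`.
  have hcritfix : ∀ z ∈ {z ∈ U | (fderiv ℂ φ z).det = 0}, σ z = z := fun z hz =>
    hcrit z hz.1 hz.2 _ (hUσ z hz.1) (hφσ z hz.1).symm
  have : LocallyCompactSpace V := hVopen.locallyCompactSpace
  have hq := isQuotientMap_restrict hφholo.continuousOn hφmaps hφsurj hφproper
  set f : EuclideanSpace ℂ (Fin d) → ℂ := fun v => g (Function.invFunOn φ U v) with hf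
  have hfφ : ∀ z ∈ U, g z = f (φ z) := by
    intro z hz
    have hex : ∃ w ∈ U, φ w = φ z := ⟨z, hz, rfl⟩
    rcases hfib z hz _ (Function.invFunOn_mem hex) (Function.invFunOn_eq hex).symm with h | h
    · simp only [hf]
      rw [h]
    · simp only [hf]
      rw [h, hgσ z hz]
  refine ⟨f, ?_, hfφ⟩
  have hfc : ContinuousOn f V := by
    rw [continuousOn_iff_continuous_domRestrict, hq.continuous_iff]
    exact hg.continuousOn.domRestrict.congr fun z => hfφ z z.2
  have hfd : ∀ v ∈ V, v ∉ φ '' {z ∈ U | (fderiv ℂ φ z).det = 0} → DifferentiableAt ℂ f v := by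
    intro v hv hvC
    obtain ⟨z, hz, rfl⟩ := hφsurj.symm ▸ hv
    exact differentiableAt_of_comp_eventuallyEq (hφd z hz) (fun h => hvC ⟨z, ⟨hz, h⟩, rfl⟩)
      (hg.differentiableAt (hUopen.mem_nhds hz))
      (by filter_upwards [hUopen.mem_nhds hz] with w hw using hfφ w hw)
      (nhds_le_map_of_orbit_fibers hUopen hVopen hφmaps hq hσc hφσ hfib hz)
  -- `σ (σ 0) = 0` says `A B + B = 0`, so the linear part is itself an involution.
  have hAA : ∀ z, A (A z) = z := by
    intro z
    have h0 := hσinv 0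
    have hz := hσinv z
    simp only [hσ, map_add, map_zero, zero_add] at h0 hz
    rwa [add_assoc, h0, add_zero] at hz
  -- `det A = -1` forces `A ≠ 1`, so the involution `A` has an anti-invariant vector.
  obtain ⟨n, hn, hAn⟩ : ∃ n, n ≠ 0 ∧ A n = -n := by
    obtain ⟨u, hu⟩ : ∃ u, A u ≠ u := by
      by_contra! hA
      have hA1 : A = LinearMap.id := LinearMap.ext hA
      rw [hA1, LinearMap.det_id] at hdetA
      norm_num at hdetA
    exact ⟨u - A u, sub_ne_zero.2 hu.symm, by rw [map_sub, hAA, neg_sub]⟩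
  refine differentiableOn_of_countable_slices hVopen hfc hfd
    (dense_compl_image_of_det_eq_zero (fun z hz => hφd z hz.1) fun z hz => hz.2) ?_
  refine dense_countable_slices (p := fun z => (2⁻¹ : ℂ) • (z + σ z)) hUopen hφholo ?_ hn ?_
    (fun z hz => hz.1) ?_
  · have hσD : Differentiable ℂ σ := fun z => (hσd z).differentiableAt
    fun_prop
  · intro z ζ
    simp only [hσ, map_add, map_smul, hAn]
    congr 1
    module
  · intro z hz
    rw [hcritfix z hz]
    module
end

section
/- Let σ : ℂ^d → ℂ^d be an affine-linear involution with J_σ = −1, let U, V be domains in ℂ^d, and let φ : U → V be a σ-invariant 2-proper holomorphic map whose Jacobian J_φ agrees on U with an affine-linear function. Then for every function g holomorphic on U satisfying g(σ(z)) = −g(z) for all z ∈ U, there exists a function f holomorphic on V such that g(z) = J_φ(z)·f(φ(z)) for all z ∈ U. -/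
/-!
Write `j = l + c` for the affine function equal to `J_φ` on `U`. Differentiating `φ ∘ σ = φ` gives
`j ∘ σ = -j`, so fixed points of `σ` are zeros of `j`; conversely a zero of `j` is alone in its
fibre, hence fixed by `σ`. Therefore every fibre of `φ` is an orbit `{z, σ z}`, and `g / j` is
constant on fibres. It descends to a function `F` on `V`, and the task is to see that `F`,
restricted to the regular values `R` and extended by continuity, is holomorphic.

Near a regular value this is the inverse function theorem. Near `φ z₀` with `j z₀ = 0`, the map
`σ` is the reflection `z ↦ z - 2 j(z) e`, where `l e = 1`. Let `ψ z = z + (j(z)² - j(z)) e` be the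
folding map, which squares the coordinate `j` and fixes the others. An odd holomorphic function is
`j · (h ∘ ψ)` with `h` holomorphic (`exists_odd_factor`, by a Cauchy integral); applied to `g` and
to `j • φ` this gives `g = j · (h ∘ ψ)` and `φ = Φ ∘ ψ`. The chain rule yields
`j = J_φ = (J_Φ ∘ ψ) · 2j`, so `J_Φ = 1/2` near `z₀`: this is where affineness of `J_φ` enters. Hence
`Φ` is a local biholomorphism and `h ∘ Φ⁻¹` is the required holomorphic extension of `F` near
`φ z₀` (`exists_local_quotient_of_critical`). The regular values are dense in `V`, so these local
extensions agree and `extendFrom R F` is the function sought.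
-/

open Filter Topology Metric Set

section SeveralVariables

variable {E G : Type*} [NormedAddCommGroup E] [NormedSpace ℂ E]
  [NormedAddCommGroup G] [NormedSpace ℂ G]

/-! ### Holomorphic functions of several variables -/

/-- A complex differentiable function of several variables is `C¹`: along each direction `v` the
functions `ζ ↦ f (z + ζ v)` depend on `z` locally uniformly, hence so do their derivatives at `0`. -/
theorem contDiffOn_one_of_holo [FiniteDimensional ℂ E] [CompleteSpace G] {U : Set E} (hU : IsOpen U) {f : E → G}
    (hf : DifferentiableOn ℂ f U) : ContDiffOn ℂ 1 f U := by
  have hcont : ContinuousOn (fderiv ℂ f) U := by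
    rw [continuousOn_clm_apply]
    intro v z₀ hz₀
    apply ContinuousAt.continuousWithinAt
    have hline : Continuous fun p : E × ℂ => p.1 + p.2 • v := by fun_prop
    have hev : ∀ᶠ p : E × ℂ in 𝓝 z₀ ×ˢ 𝓝 0, p.1 + p.2 • v ∈ U := by
      rw [← nhds_prod_eq]
      exact hline.continuousAt.eventually (by simpa using hU.mem_nhds hz₀)
    obtain ⟨pa, hpa, pb, hpb, hab⟩ := eventually_prod_iff.1 hev
    obtain ⟨δ, hδ, hball⟩ := Metric.eventually_nhds_iff_ball.1 hpb
    have hloc : TendstoLocallyUniformlyOn (fun z ζ => f (z + ζ • v)) (fun ζ => f (z₀ + ζ • v))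
        (𝓝 z₀) (ball (0 : ℂ) δ) := by
      rw [tendstoLocallyUniformlyOn_iff_forall_tendsto]
      intro ζ hζ
      have hmem : z₀ + ζ • v ∈ U := hab hpa.self_of_nhds (hball ζ hζ)
      have hfc : ContinuousAt f (z₀ + ζ • v) := (hf.differentiableAt (hU.mem_nhds hmem)).continuousAt
      have h1 : Tendsto (fun y : E × ℂ => f (y.1 + y.2 • v)) (𝓝 z₀ ×ˢ 𝓝[ball 0 δ] ζ)
          (𝓝 (f (z₀ + ζ • v))) := by
        refine (ContinuousAt.tendsto (x := (z₀, ζ))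
          (f := fun y : E × ℂ => f (y.1 + y.2 • v)) ?_).mono_left ?_
        · exact ContinuousAt.comp (g := f) (f := fun p : E × ℂ => p.1 + p.2 • v) hfc
            hline.continuousAt
        · rw [nhds_prod_eq]
          exact Filter.prod_mono le_rfl nhdsWithin_le_nhds
      have h2 : Tendsto (fun y : E × ℂ => f (z₀ + y.2 • v)) (𝓝 z₀ ×ˢ 𝓝[ball 0 δ] ζ)
          (𝓝 (f (z₀ + ζ • v))) := by
        have : ContinuousAt (fun x : ℂ => f (z₀ + x • v)) ζ :=
          ContinuousAt.comp (g := f) (f := fun x : ℂ => z₀ + x • v) hfc (by fun_prop)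
        exact (this.tendsto.mono_left nhdsWithin_le_nhds).comp tendsto_snd
      exact (h2.prodMk_nhds h1).mono_right (nhds_le_uniformity _)
    have hd : ∀ z, pa z → ∀ ζ ∈ ball (0 : ℂ) δ,
        HasDerivAt (fun ζ : ℂ => f (z + ζ • v)) (fderiv ℂ f (z + ζ • v) v) ζ := by
      intro z hz ζ hζ
      have hm := hab hz (hball ζ hζ)
      have h1 : HasDerivAt (fun ζ : ℂ => z + ζ • v) v ζ := by
        simpa using ((hasDerivAt_id ζ).smul_const v).const_add z
      exact (hf.differentiableAt (hU.mem_nhds hm)).hasFDerivAt.comp_hasDerivAt ζ h1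
    have hT := (hloc.deriv (hpa.mono fun z hz ζ hζ =>
      (hd z hz ζ hζ).differentiableAt.differentiableWithinAt) isOpen_ball).tendsto_at
        (mem_ball_self hδ)
    have h0 := (hd z₀ hpa.self_of_nhds 0 (mem_ball_self hδ)).deriv
    simp only [Function.comp_apply, zero_smul, add_zero] at h0 hT
    rw [h0] at hT
    refine hT.congr' (hpa.mono fun z hz => ?_)
    simpa using (hd z hz 0 (mem_ball_self hδ)).deriv
  have := (contDiffOn_succ_iff_fderiv_of_isOpen (𝕜 := ℂ) (n := 0) (f := f) hU).2
    ⟨hf, by simp, contDiffOn_zero.2 hcont⟩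
  simpa using this

theorem differentiableAt_circleIntegral_param [FiniteDimensional ℂ E] [CompleteSpace G]
    {W : Set (E × ℂ)} (hW : IsOpen W) {K : E × ℂ → G}
    (hK : DifferentiableOn ℂ K W) {r : ℝ} {x₀ : E} (hr : 0 ≤ r)
    (hx₀ : ∀ ζ ∈ sphere (0 : ℂ) r, (x₀, ζ) ∈ W) :
    DifferentiableAt ℂ (fun x => ∮ ζ in C(0, r), K (x, ζ)) x₀ := by
  have : ProperSpace E := FiniteDimensional.proper ℂ E
  have hK1 := contDiffOn_one_of_holo hW hK
  have hcont : ContinuousOn (fderiv ℂ K) W := hK1.continuousOn_fderiv_of_isOpen hW le_rfl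
  have hev : ∀ᶠ x in 𝓝 x₀, ∀ ζ ∈ sphere (0 : ℂ) r, (x, ζ) ∈ W := by
    refine (isCompact_sphere (0 : ℂ) r).eventually_forall_of_forall_eventually fun ζ hζ => ?_
    exact hW.mem_nhds (hx₀ ζ hζ)
  obtain ⟨ε, hε, hball⟩ := Metric.nhds_basis_closedBall.eventually_iff.1 hev
  have hsub : closedBall x₀ ε ×ˢ sphere (0 : ℂ) r ⊆ W := fun p hp => hball hp.1 p.2 hp.2
  obtain ⟨C, hC⟩ := ((isCompact_closedBall x₀ ε).prod (isCompact_sphere (0 : ℂ) r))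
    |>.exists_bound_of_continuousOn (hcont.mono hsub)
  have hcm : ∀ θ, circleMap 0 r θ ∈ sphere (0 : ℂ) r := fun θ => circleMap_mem_sphere 0 hr θ
  have hFc : ∀ x ∈ closedBall x₀ ε,
      Continuous fun θ : ℝ => deriv (circleMap 0 r) θ • K (x, circleMap 0 r θ) := by
    intro x hx
    simp only [deriv_circleMap]
    refine Continuous.smul (by fun_prop) ?_
    exact hK.continuousOn.comp_continuous (f := fun θ : ℝ => (x, circleMap 0 r θ))
      (by fun_prop) fun θ => hsub ⟨hx, hcm θ⟩
  have hF'c : Continuous fun θ : ℝ => deriv (circleMap 0 r) θ •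
      (fderiv ℂ K (x₀, circleMap 0 r θ)).comp (ContinuousLinearMap.inl ℂ E ℂ) := by
    simp only [deriv_circleMap]
    have hfd : Continuous fun θ : ℝ => fderiv ℂ K (x₀, circleMap 0 r θ) :=
      hcont.comp_continuous (f := fun θ : ℝ => (x₀, circleMap 0 r θ)) (by fun_prop)
        fun θ => hsub ⟨mem_closedBall_self hε.le, hcm θ⟩
    have hc : Continuous fun θ : ℝ => circleMap 0 r θ * Complex.I := by fun_prop
    exact hc.smul (hfd.clm_comp continuous_const)
  refine (intervalIntegral.hasFDerivAt_integral_of_dominated_of_fderiv_le (𝕜 := ℂ)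
    (s := closedBall x₀ ε)
    (F := fun x θ => deriv (circleMap 0 r) θ • K (x, circleMap 0 r θ))
    (F' := fun x θ => deriv (circleMap 0 r) θ •
      (fderiv ℂ K (x, circleMap 0 r θ)).comp (ContinuousLinearMap.inl ℂ E ℂ))
    (bound := fun _ => r * (C * ‖ContinuousLinearMap.inl ℂ E ℂ‖))
    (closedBall_mem_nhds x₀ hε) ?_ ?_ ?_ ?_ ?_ ?_).differentiableAt
  · filter_upwards [closedBall_mem_nhds x₀ hε] with x hx
    exact (hFc x hx).aestronglyMeasurable
  · exact (hFc x₀ (mem_closedBall_self hε.le)).intervalIntegrable _ _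
  · exact hF'c.aestronglyMeasurable
  · refine Eventually.of_forall fun θ _ x hx => ?_
    rw [norm_smul]
    have h1 : ‖deriv (circleMap 0 r) θ‖ = r := by simp [deriv_circleMap, abs_of_nonneg hr]
    rw [h1]
    gcongr
    refine (ContinuousLinearMap.opNorm_comp_le _ _).trans ?_
    gcongr
    exact hC _ ⟨hx, hcm θ⟩
  · exact intervalIntegrable_const
  · refine Eventually.of_forall fun θ _ x hx => ?_
    have h1 : HasFDerivAt K _ (x, circleMap 0 r θ) :=
      (hK.differentiableAt (hW.mem_nhds (hsub ⟨hx, hcm θ⟩))).hasFDerivAt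
    exact (h1.comp x (hasFDerivAt_prodMk_left x _)).const_smul _

/-! ### Functions odd under a reflection -/

/-- If `g` is odd under the reflection `z ↦ z - 2 j(z) e`, `j = l + c`, then near a point of `{j = 0}`
it is `j` times a holomorphic function of the folded variable `z + (j(z)² - j(z)) e`. Averaging the
Cauchy formulas at `j(z)` and `-j(z)` on the line through `z` in direction `e` gives the kernel
`j(z) / (ζ² - j(z)²)`, which depends on `j(z)²` only, apart from the factor `j(z)`. -/
theorem exists_odd_factor [FiniteDimensional ℂ E] [CompleteSpace G] (l : E →L[ℂ] ℂ) (c : ℂ) (e z₀ : E) (he : l e = 1)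
    (hz₀ : l z₀ + c = 0) {U : Set E} (hU : IsOpen U) (hz₀U : z₀ ∈ U) {g : E → G}
    (hg : DifferentiableOn ℂ g U)
    (hodd : ∀ z ∈ U, g (z - (2 * (l z + c)) • e) = - g z) :
    ∃ h : E → G, (∀ᶠ w in 𝓝 z₀, DifferentiableAt ℂ h w) ∧
      ∀ᶠ z in 𝓝 z₀, g z = (l z + c) • h (z + ((l z + c) ^ 2 - (l z + c)) • e) := by
  have hcT : Continuous fun p : E × ℂ => p.1 + (p.2 - (l p.1 + c)) • e := by fun_prop
  have hcj : Continuous fun z => l z + c := by fun_prop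
  have hev : ∀ᶠ p : E × ℂ in 𝓝 z₀ ×ˢ 𝓝 0, p.1 + (p.2 - (l p.1 + c)) • e ∈ U := by
    rw [← nhds_prod_eq]
    exact hcT.continuousAt.eventually (by simpa [hz₀] using hU.mem_nhds hz₀U)
  obtain ⟨pa, hpa, pb, hpb, hab⟩ := eventually_prod_iff.1 hev
  obtain ⟨r, hr, hball⟩ := Metric.nhds_basis_closedBall.eventually_iff.1 hpb
  have hsmall : ∀ s > 0, ∀ᶠ z in 𝓝 z₀, ‖l z + c‖ < s := by
    intro s hs
    have : Tendsto (fun z => ‖l z + c‖) (𝓝 z₀) (𝓝 0) := by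
      simpa [hz₀] using (hcj.norm.tendsto z₀)
    exact this.eventually_lt_const hs
  set W : Set (E × ℂ) := {p | p.2 ^ 2 - (l p.1 + c) ≠ 0 ∧ p.1 + (p.2 - (l p.1 + c)) • e ∈ U}
    with hWdef
  have hW : IsOpen W := by
    refine IsOpen.inter ?_ (hU.preimage hcT)
    exact isOpen_ne_fun (by fun_prop) continuous_const
  have hK : DifferentiableOn ℂ (fun p : E × ℂ =>
      (p.2 ^ 2 - (l p.1 + c))⁻¹ • g (p.1 + (p.2 - (l p.1 + c)) • e)) W := by
    refine DifferentiableOn.smul (DifferentiableOn.inv (by fun_prop) fun p hp => hp.1) ?_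
    exact hg.comp (by fun_prop) fun p hp => hp.2
  refine ⟨fun w => (2 * Real.pi * Complex.I : ℂ)⁻¹ • ∮ ζ in C(0, r),
    (ζ ^ 2 - (l w + c))⁻¹ • g (w + (ζ - (l w + c)) • e), ?_, ?_⟩
  · filter_upwards [hpa, hsmall (r ^ 2) (by positivity)] with w hw hw2
    refine (differentiableAt_circleIntegral_param hW hK hr.le fun ζ hζ => ⟨?_, ?_⟩).const_smul _
    · intro h0
      have : ‖l w + c‖ = r ^ 2 := by
        rw [← sub_eq_zero.1 h0, norm_pow, mem_sphere_zero_iff_norm.1 hζ]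
      exact hw2.ne this
    · exact hab hw (hball (sphere_subset_closedBall hζ))
  · filter_upwards [hpa, hsmall r hr] with z hz hzr
    set x := l z + c with hx
    have hγd : DifferentiableOn ℂ (fun ζ : ℂ => g (z + (ζ - x) • e)) (closedBall 0 r) :=
      hg.comp (by fun_prop) fun ζ hζ => hab hz (hball hζ)
    have hcl : DiffContOnCl ℂ (fun ζ : ℂ => g (z + (ζ - x) • e)) (ball 0 r) :=
      DifferentiableOn.diffContOnCl (hγd.mono closure_ball_subset_closedBall)
    have h1 := hcl.circleIntegral_sub_inv_smul (w := x) (by simpa using hzr)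
    have h2 := hcl.circleIntegral_sub_inv_smul (w := -x) (by simpa using hzr)
    have hxx : g (z + (-x - x) • e) = - g z := by
      rw [← hodd z (by simpa [hx] using hab hz (hball (x := x) (by simpa using hzr.le)))]
      congr 1
      rw [← hx]; module
    simp only [sub_self, zero_smul, add_zero, hxx] at h1 h2
    have hj : l (z + (x ^ 2 - x) • e) + c = x ^ 2 := by
      simp only [map_add, map_smul, he, smul_eq_mul, mul_one]
      rw [hx]; ring
    have hci : ∀ w : ℂ, ‖w‖ < r →
        CircleIntegrable (fun ζ => (ζ - w)⁻¹ • g (z + (ζ - x) • e)) 0 r := by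
      intro w hw
      refine ContinuousOn.circleIntegrable hr.le (ContinuousOn.smul ?_
        (hγd.continuousOn.mono sphere_subset_closedBall))
      refine ContinuousOn.inv₀ (by fun_prop) fun ζ hζ h0 => ?_
      rw [← sub_eq_zero.1 h0, mem_sphere_zero_iff_norm.1 hζ] at hw
      exact lt_irrefl _ hw
    have hsub := circleIntegral.integral_sub (hci x hzr) (hci (-x) (by simpa using hzr))
    have hker : (∮ ζ in C(0, r), ((ζ - x)⁻¹ • g (z + (ζ - x) • e)
          - (ζ - -x)⁻¹ • g (z + (ζ - x) • e)))
        = ∮ ζ in C(0, r), (2 * x) • ((ζ ^ 2 - x ^ 2)⁻¹ • g (z + (ζ - x) • e)) := by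
      refine circleIntegral.integral_congr hr.le fun ζ hζ => ?_
      have hζ' := mem_sphere_zero_iff_norm.1 hζ
      have n1 : ζ - x ≠ 0 := fun h0 => by
        rw [← sub_eq_zero.1 h0, hζ'] at hzr
        exact lt_irrefl _ hzr
      have n2 : ζ + x ≠ 0 := fun h0 => by
        rw [← norm_neg, ← eq_neg_of_add_eq_zero_left h0, hζ'] at hzr
        exact lt_irrefl _ hzr
      have n3 : ζ ^ 2 - x ^ 2 ≠ 0 := by
        rw [show ζ ^ 2 - x ^ 2 = (ζ - x) * (ζ + x) by ring]
        exact mul_ne_zero n1 n2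
      simp only [← sub_smul, smul_smul, sub_neg_eq_add]
      congr 1
      rw [show ζ ^ 2 - x ^ 2 = (ζ - x) * (ζ + x) by ring]
      field_simp
      ring
    rw [hsub, circleIntegral.integral_smul, h1, h2] at hker
    have hpi : (2 * Real.pi * Complex.I : ℂ) ≠ 0 := Complex.two_pi_I_ne_zero
    simp only [hj]
    have harg : ∀ ζ : ℂ, z + (x ^ 2 - x) • e + (ζ - x ^ 2) • e = z + (ζ - x) • e := by
      intro ζ; module
    simp only [harg]
    set I := ∮ ζ in C(0, r), (ζ ^ 2 - x ^ 2)⁻¹ • g (z + (ζ - x) • e)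
    have h3 : (2 : ℂ) • ((2 * Real.pi * Complex.I : ℂ) • g z) = (2 : ℂ) • (x • I) := by
      rw [smul_smul 2 x, ← hker]; module
    have h4 := smul_right_injective G (two_ne_zero (α := ℂ)) h3
    rw [smul_comm, ← h4, smul_smul, inv_mul_cancel₀ hpi, one_smul]

/-! ### Local inverses and density -/

/-- The function `q` is `k` composed with a local inverse of `f` at `p`. -/
theorem exists_comp_local_inverse [FiniteDimensional ℂ E] {f : E → E} {k : E → G} {p : E}
    (hf : ∀ᶠ w in 𝓝 p, DifferentiableAt ℂ f w) (hdet : (fderiv ℂ f p).det ≠ 0)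
    (hk : ∀ᶠ w in 𝓝 p, DifferentiableAt ℂ k w) :
    ∃ q : E → G, (∀ᶠ v in 𝓝 (f p), DifferentiableAt ℂ q v) ∧
      ∀ S ∈ 𝓝 p, ∀ᶠ v in 𝓝 (f p), ∃ w ∈ S, f w = v ∧ q v = k w := by
  have : CompleteSpace E := FiniteDimensional.complete ℂ E
  obtain ⟨N, hN, hNo, hpN⟩ := _root_.eventually_nhds_iff.1 hf
  have hC1 : ContDiffAt ℂ 1 f p :=
    (contDiffOn_one_of_holo hNo fun w hw => (hN w hw).differentiableWithinAt).contDiffAt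
      (hNo.mem_nhds hpN)
  let f' : E ≃L[ℂ] E := ContinuousLinearMap.toContinuousLinearEquivOfDetNeZero _ hdet
  have hf' : HasFDerivAt f (f' : E →L[ℂ] E) p := hf.self_of_nhds.hasFDerivAt
  set inv := hC1.localInverse hf' one_ne_zero with hinv
  have hinvC : ContDiffAt ℂ 1 inv (f p) := hC1.to_localInverse hf' one_ne_zero
  have hinvp : inv (f p) = p := hC1.localInverse_apply_image hf' one_ne_zero
  have htend : Tendsto inv (𝓝 (f p)) (𝓝 p) := by
    simpa [ContinuousAt, hinvp] using hinvC.continuousAt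
  have hright : ∀ᶠ v in 𝓝 (f p), f (inv v) = v :=
    (hC1.hasStrictFDerivAt' hf' one_ne_zero).eventually_right_inverse
  refine ⟨fun v => k (inv v), ?_, fun S hS => ?_⟩
  · filter_upwards [htend.eventually hk, hinvC.eventually (by simp)] with v hv1 hv2
    exact DifferentiableAt.comp v hv1 (hv2.differentiableAt one_ne_zero)
  · filter_upwards [hright, htend hS] with v hv hvS
    exact ⟨inv v, hvS, hv, rfl⟩

theorem dense_affine_ne_zero [FiniteDimensional ℂ E] {l : E →L[ℂ] ℂ} (hl : l ≠ 0) (c : ℂ) :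
    Dense {z | l z + c ≠ 0} := by
  have : CompleteSpace E := FiniteDimensional.complete ℂ E
  have hsurj : Function.Surjective l :=
    LinearMap.surjective (f := (l : E →ₗ[ℂ] ℂ)) (by exact_mod_cast hl)
  have hopen : IsOpenMap fun z => l z + c :=
    (Homeomorph.addRight c).isOpenMap.comp (l.isOpenMap hsurj)
  exact (dense_compl_singleton (0 : ℂ)).preimage hopen

theorem eventuallyEq_of_mul_eq [FiniteDimensional ℂ E] {l : E →L[ℂ] ℂ} (hl : l ≠ 0) (c : ℂ) {z₀ : E} {a b : E → G}
    (ha : ∀ᶠ z in 𝓝 z₀, ContinuousAt a z) (hb : ∀ᶠ z in 𝓝 z₀, ContinuousAt b z)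
    (hab : ∀ᶠ z in 𝓝 z₀, (l z + c) • a z = (l z + c) • b z) : a =ᶠ[𝓝 z₀] b := by
  filter_upwards [ha, hb, hab.eventually_nhds] with z hza hzb hzab
  have hz : z ∈ closure {z | l z + c ≠ 0} := dense_affine_ne_zero hl c z
  have := mem_closure_iff_nhdsWithin_neBot.1 hz
  refine tendsto_nhds_unique_of_eventuallyEq (hza.tendsto.mono_left nhdsWithin_le_nhds)
    (hzb.tendsto.mono_left nhdsWithin_le_nhds) (l := 𝓝[{z | l z + c ≠ 0}] z) ?_
  filter_upwards [nhdsWithin_le_nhds hzab, self_mem_nhdsWithin] with y hy hy0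
  exact smul_right_injective G hy0 hy

/-! ### The folding map -/

/-- The folding map sends neighbourhoods of a point of `{j = 0}` onto neighbourhoods of that point:
preimages come from small square roots of `j(w)`. -/
theorem eventually_exists_fold_eq (l : E →L[ℂ] ℂ) (c : ℂ) (e z₀ : E) (he : l e = 1)
    (hz₀ : l z₀ + c = 0) {p : E → Prop} (hp : ∀ᶠ z in 𝓝 z₀, p z) :
    ∀ᶠ w in 𝓝 z₀, ∃ z, p z ∧ z + ((l z + c) ^ 2 - (l z + c)) • e = w := by
  have hcT : Continuous fun p : E × ℂ => p.1 + (p.2 - (l p.1 + c)) • e := by fun_prop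
  have hev : ∀ᶠ y : E × ℂ in 𝓝 z₀ ×ˢ 𝓝 0, p (y.1 + (y.2 - (l y.1 + c)) • e) := by
    rw [← nhds_prod_eq]
    exact hcT.continuousAt.eventually (by simpa [hz₀] using hp)
  obtain ⟨pa, hpa, pb, hpb, hab⟩ := eventually_prod_iff.1 hev
  obtain ⟨δ, hδ, hball⟩ := Metric.eventually_nhds_iff_ball.1 hpb
  have hsmall : ∀ᶠ z in 𝓝 z₀, ‖l z + c‖ < δ ^ 2 := by
    have hcj : Continuous fun z => l z + c := by fun_prop
    have : Tendsto (fun z => ‖l z + c‖) (𝓝 z₀) (𝓝 0) := by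
      simpa [hz₀] using (hcj.norm.tendsto z₀)
    exact this.eventually_lt_const (by positivity)
  filter_upwards [hpa, hsmall] with w hw hwδ
  obtain ⟨t, ht⟩ := IsAlgClosed.exists_pow_nat_eq (l w + c) two_pos
  have htδ : ‖t‖ < δ := by
    rw [← ht, norm_pow] at hwδ
    exact lt_of_pow_lt_pow_left₀ 2 hδ.le hwδ
  refine ⟨w + (t - (l w + c)) • e, hab hw (hball t (by simpa using htδ)), ?_⟩
  have hj : l (w + (t - (l w + c)) • e) + c = t := by
    simp only [map_add, map_smul, he, smul_eq_mul, mul_one]; ring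
  rw [hj, ht]; module

theorem clm_det_comp (S T : E →L[ℂ] E) : (S.comp T).det = S.det * T.det :=
  LinearMap.det_comp (S : E →ₗ[ℂ] E) (T : E →ₗ[ℂ] E)

theorem hasFDerivAt_fold (l : E →L[ℂ] ℂ) (c : ℂ) (e z : E) :
    HasFDerivAt (fun z => z + ((l z + c) ^ 2 - (l z + c)) • e)
      (ContinuousLinearMap.id ℂ E + ((2 * (l z + c) - 1) • l).smulRight e) z := by
  have h1 : HasFDerivAt (fun z => l z + c) l z := l.hasFDerivAt.add_const c
  have h2 := (hasFDerivAt_id z).add (((h1.pow 2).sub h1).smul_const e)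
  refine h2.congr_fderiv ?_
  ext v
  simp only [add_apply, ContinuousLinearMap.smulRight_apply,
    sub_apply, smul_apply, smul_eq_mul, nsmul_eq_mul]
  congr 2
  push_cast
  ring

theorem det_fold [FiniteDimensional ℂ E] (l : E →L[ℂ] ℂ) (c : ℂ) (e z : E) (he : l e = 1) :
    (ContinuousLinearMap.id ℂ E + ((2 * (l z + c) - 1) • l).smulRight e).det
      = 2 * (l z + c) := by
  have h := LinearMap.transvection.det ((2 * (l z + c) - 1) • (l : E →ₗ[ℂ] ℂ)) e
  have h2 : ((ContinuousLinearMap.id ℂ E + ((2 * (l z + c) - 1) • l).smulRight e :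
      E →L[ℂ] E) : E →ₗ[ℂ] E) =
      LinearMap.transvection ((2 * (l z + c) - 1) • (l : E →ₗ[ℂ] ℂ)) e := by
    ext v
    simp [LinearMap.transvection.apply]
  rw [ContinuousLinearMap.det, h2, h]
  simp [he]

/-! ### Local quotients -/

/-- Near a critical point `z₀` the quotient `g / J_f` descends to a holomorphic function of `f`.
Only one preimage `z` of each nearby `v` is controlled here. -/
theorem exists_local_quotient_of_critical [FiniteDimensional ℂ E] {U : Set E} (hU : IsOpen U) {f : E → E} {g : E → ℂ}
    (hf : DifferentiableOn ℂ f U) (hg : DifferentiableOn ℂ g U)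
    (l : E →L[ℂ] ℂ) (c : ℂ) (e z₀ : E) (he : l e = 1) (hz₀ : l z₀ + c = 0) (hz₀U : z₀ ∈ U)
    (hJ : ∀ z ∈ U, (fderiv ℂ f z).det = l z + c)
    (hfs : ∀ z ∈ U, f (z - (2 * (l z + c)) • e) = f z)
    (hgs : ∀ z ∈ U, g (z - (2 * (l z + c)) • e) = - g z) :
    ∃ q : E → ℂ, (∀ᶠ v in 𝓝 (f z₀), DifferentiableAt ℂ q v) ∧
      ∀ᶠ v in 𝓝 (f z₀), ∃ z ∈ U, f z = v ∧ g z = (l z + c) * q v := by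
  have : CompleteSpace E := FiniteDimensional.complete ℂ E
  have hl : l ≠ 0 := by rintro rfl; simp at he
  obtain ⟨h, hh, hgh⟩ := exists_odd_factor l c e z₀ he hz₀ hU hz₀U hg hgs
  obtain ⟨Φ, hΦ, hfΦ⟩ := exists_odd_factor l c e z₀ he hz₀ hU hz₀U
    (g := fun z => (l z + c) • f z) (DifferentiableOn.smul (by fun_prop) hf) (by
      intro z hz
      have hj : l (z - (2 * (l z + c)) • e) + c = -(l z + c) := by
        simp only [map_sub, map_smul, he, smul_eq_mul, mul_one]; ring
      simp only [hj, hfs z hz, neg_smul])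
  set ψ : E → E := fun z => z + ((l z + c) ^ 2 - (l z + c)) • e with hψ
  have hψc : Continuous ψ := by fun_prop
  have hψ0 : ψ z₀ = z₀ := by simp [hψ, hz₀]
  have hψt : Tendsto ψ (𝓝 z₀) (𝓝 z₀) := by simpa [hψ0] using hψc.tendsto z₀
  have hUev : ∀ᶠ z in 𝓝 z₀, z ∈ U := hU.mem_nhds hz₀U
  have hfac : f =ᶠ[𝓝 z₀] fun z => Φ (ψ z) := by
    refine eventuallyEq_of_mul_eq hl c ?_ ?_ hfΦ
    · filter_upwards [hUev] with z hz
      exact (hf.differentiableAt (hU.mem_nhds hz)).continuousAt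
    · filter_upwards [hψt.eventually hΦ] with z hz
      exact ContinuousAt.comp (g := Φ) hz.continuousAt hψc.continuousAt
  obtain ⟨N, hN, hNo, hzN⟩ := _root_.eventually_nhds_iff.1 hΦ
  have hΦd : ContinuousOn (fderiv ℂ Φ) N :=
    (contDiffOn_one_of_holo hNo fun w hw => (hN w hw).differentiableWithinAt)
      |>.continuousOn_fderiv_of_isOpen hNo le_rfl
  -- `J_f = j` and `J_f = (J_Φ ∘ ψ) · 2j`; cancel `j` by density of `{j ≠ 0}`.
  have hdet : (fun z => (fderiv ℂ Φ (ψ z)).det) =ᶠ[𝓝 z₀] fun _ => (1 / 2 : ℂ) := by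
    refine eventuallyEq_of_mul_eq hl c ?_ (Eventually.of_forall fun _ => continuousAt_const) ?_
    · filter_upwards [hψt (hNo.mem_nhds hzN)] with z hz
      have h1 : ContinuousAt (fderiv ℂ Φ) (ψ z) := hΦd.continuousAt (hNo.mem_nhds hz)
      exact ContinuousLinearMap.continuous_det.continuousAt.comp
        (ContinuousAt.comp (g := fderiv ℂ Φ) h1 hψc.continuousAt)
    · filter_upwards [hUev, hfac.eventuallyEq_nhds, hψt.eventually hΦ] with z hz hzf hzΦ
      have h1 := (hzΦ.hasFDerivAt.comp z (hasFDerivAt_fold l c e z)).congr_of_eventuallyEq hzf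
      have h2 := hJ z hz
      rw [h1.fderiv, clm_det_comp, det_fold l c e z he] at h2
      simp only [smul_eq_mul]
      linear_combination (1 / 2) * h2
  have hdet0 : (fderiv ℂ Φ z₀).det ≠ 0 := by
    have := hdet.self_of_nhds
    simp only [hψ0] at this
    rw [this]; norm_num
  have hfz : f z₀ = Φ z₀ := by simpa [hψ0] using hfac.self_of_nhds
  obtain ⟨q, hq, hqS⟩ := exists_comp_local_inverse hΦ hdet0 hh
  rw [← hfz] at hq hqS
  refine ⟨q, hq, ?_⟩
  have hS := eventually_exists_fold_eq l c e z₀ he hz₀ (hUev.and (hfac.and hgh))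
  filter_upwards [hqS _ hS] with v hv
  obtain ⟨w, ⟨z, ⟨hzU, hzf, hzg⟩, rfl⟩, hwv, hqw⟩ := hv
  exact ⟨z, hzU, hzf.trans hwv, by rw [hzg, hqw]; rfl⟩

theorem exists_local_quotient_of_regular [FiniteDimensional ℂ E] {U : Set E} (hU : IsOpen U) {f : E → E} {g : E → ℂ}
    (hf : DifferentiableOn ℂ f U) (hg : DifferentiableOn ℂ g U)
    (l : E →L[ℂ] ℂ) (c : ℂ) (z₀ : E) (hz₀ : l z₀ + c ≠ 0) (hz₀U : z₀ ∈ U)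
    (hJ : ∀ z ∈ U, (fderiv ℂ f z).det = l z + c) :
    ∃ q : E → ℂ, (∀ᶠ v in 𝓝 (f z₀), DifferentiableAt ℂ q v) ∧
      ∀ᶠ v in 𝓝 (f z₀), ∃ z ∈ U, f z = v ∧ g z = (l z + c) * q v := by
  have hUev : ∀ᶠ z in 𝓝 z₀, z ∈ U := hU.mem_nhds hz₀U
  have hne : ∀ᶠ z in 𝓝 z₀, l z + c ≠ 0 := by
    have hcj : Continuous fun z => l z + c := by fun_prop
    exact hcj.continuousAt.eventually_ne hz₀
  obtain ⟨q, hq, hqS⟩ := exists_comp_local_inverse (f := f) (k := fun z => g z / (l z + c))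
    (hUev.mono fun z hz => hf.differentiableAt (hU.mem_nhds hz)) (by rwa [hJ z₀ hz₀U])
    (by
      filter_upwards [hUev, hne] with z hz hz0
      simp only [div_eq_mul_inv]
      have hd : DifferentiableAt ℂ (fun z => l z + c) z := by fun_prop
      exact (hg.differentiableAt (hU.mem_nhds hz)).fun_mul (hd.fun_inv hz0))
  refine ⟨q, hq, ?_⟩
  filter_upwards [hqS _ (hUev.and hne)] with v hv
  obtain ⟨w, ⟨hwU, hw0⟩, hwv, hqw⟩ := hv
  refine ⟨w, hwU, hwv, ?_⟩
  rw [hqw]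
  field_simp

/-! ### Descent along the two-sheeted map -/

/-- The main statement on an arbitrary finite-dimensional complex normed space. -/
theorem exists_quotient_of_involution [FiniteDimensional ℂ E]
    (σ : E → E)
    (A : E →ₗ[ℂ] E)
    (B : E)
    (hσ : ∀ z, σ z = A z + B)
    (hσinv : ∀ z, σ (σ z) = z)
    (hdetA : LinearMap.det A = -1)
    (U V : Set (E))
    (hUopen : IsOpen U) (hUne : U.Nonempty)
    (hVopen : IsOpen V)
    (hUinv : σ '' U ⊆ U)
    (φ : E → E)
    (hφholo : DifferentiableOn ℂ φ U)
    (hφmaps : Set.MapsTo φ U V)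
    (hφsurj : φ '' U = V)
    (hfib2 : ∀ v ∈ V \ (φ '' {z ∈ U | (fderiv ℂ φ z).det = 0}),
      Nat.card {z ∈ U | φ z = v} = 2)
    (hfib1 : ∀ v ∈ φ '' {z ∈ U | (fderiv ℂ φ z).det = 0},
      Nat.card {z ∈ U | φ z = v} = 1)
    (hφσ : ∀ z ∈ U, φ (σ z) = φ z)
    (hJaff : ∃ (l : E →ₗ[ℂ] ℂ) (c : ℂ),
      ∀ z ∈ U, (fderiv ℂ φ z).det = l z + c)
    (g : E → ℂ)
    (hg : DifferentiableOn ℂ g U)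
    (hgodd : ∀ z ∈ U, g (σ z) = - g z) :
    ∃ f : E → ℂ,
      DifferentiableOn ℂ f V ∧ ∀ z ∈ U, g z = (fderiv ℂ φ z).det * f (φ z) := by
  classical
  obtain ⟨l₀, c, hJ₀⟩ := hJaff
  set l : E →L[ℂ] ℂ := LinearMap.toContinuousLinearMap l₀
  have hJ : ∀ z ∈ U, (fderiv ℂ φ z).det = l z + c := hJ₀
  set A' : E →L[ℂ] E := LinearMap.toContinuousLinearMap A
  have hσU : ∀ z ∈ U, σ z ∈ U := fun z hz => hUinv ⟨z, hz, rfl⟩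
  have hσd : ∀ z, HasFDerivAt σ A' z := by
    intro z
    have : σ = fun z => A' z + B := funext hσ
    rw [this]
    exact A'.hasFDerivAt.add_const B
  have hA'det : A'.det = -1 := hdetA
  have hJodd : ∀ z ∈ U, l (σ z) + c = -(l z + c) := by
    intro z hz
    have h1 := (hφholo.differentiableAt (hUopen.mem_nhds (hσU z hz))).hasFDerivAt.comp z (hσd z)
    have h2 : φ ∘ σ =ᶠ[𝓝 z] φ := by
      filter_upwards [hUopen.mem_nhds hz] with y hy using hφσ y hy
    have h3 := (h1.congr_of_eventuallyEq h2.symm).fderiv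
    have h4 := hJ z hz
    rw [h3, clm_det_comp, hA'det, hJ _ (hσU z hz)] at h4
    linear_combination -h4
  have hJfix : ∀ z ∈ U, σ z = z → l z + c = 0 := by
    intro z hz h
    have := hJodd z hz
    rw [h] at this
    linear_combination this / 2
  have hone : ∀ z ∈ U, l z + c = 0 → ∀ z' ∈ U, φ z' = φ z → z' = z := by
    intro z hz h z' hz' hzz'
    have hcard := hfib1 (φ z) ⟨z, ⟨hz, by rw [hJ z hz, h]⟩, rfl⟩
    obtain ⟨hsub, -⟩ := Nat.card_eq_one_iff_unique.1 hcard
    exact congrArg Subtype.val (hsub.elim ⟨z', hz', hzz'⟩ ⟨z, hz, rfl⟩)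
  have hfix : ∀ z ∈ U, l z + c = 0 → σ z = z := fun z hz h =>
    hone z hz h (σ z) (hσU z hz) (hφσ z hz)
  have hfiber : ∀ z ∈ U, ∀ z' ∈ U, φ z' = φ z → z' = z ∨ z' = σ z := by
    intro z hz z' hz' hzz'
    by_cases hv : φ z ∈ φ '' {z ∈ U | (fderiv ℂ φ z).det = 0}
    · obtain ⟨y, ⟨hy, hy0⟩, hyz⟩ := hv
      rw [hJ y hy] at hy0
      left
      rw [hone y hy hy0 z' hz' (hzz'.trans hyz.symm), hone y hy hy0 z hz hyz.symm]
    · have hcard := hfib2 (φ z) ⟨hφmaps hz, hv⟩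
      have hne : σ z ≠ z := fun h => hv ⟨z, ⟨hz, by rw [hJ z hz, hJfix z hz h]⟩, rfl⟩
      obtain ⟨a, b, -, hab⟩ := Set.ncard_eq_two.1 hcard
      have m1 : z ∈ ({a, b} : Set E) := hab ▸ ⟨hz, rfl⟩
      have m2 : z' ∈ ({a, b} : Set E) := hab ▸ ⟨hz', hzz'⟩
      have m3 : σ z ∈ ({a, b} : Set E) := hab ▸ ⟨hσU z hz, hφσ z hz⟩
      simp only [Set.mem_insert_iff, Set.mem_singleton_iff] at m1 m2 m3
      grind
  -- If `l = 0` then `J_φ = 0` on `U`, so `σ = id` there, against `det A = -1`.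
  have hl : l ≠ 0 := by
    intro h0
    have hc : c = 0 := by
      obtain ⟨z, hz⟩ := hUne
      have := hJodd z hz
      simp only [h0, zero_apply] at this
      linear_combination this / 2
    obtain ⟨z, hz⟩ := hUne
    have h1 : σ =ᶠ[𝓝 z] id := by
      filter_upwards [hUopen.mem_nhds hz] with y hy
      exact hfix y hy (by simp [h0, hc])
    have h2 : A' = ContinuousLinearMap.id ℂ E :=
      (hσd z).unique ((hasFDerivAt_id z).congr_of_eventuallyEq h1)
    rw [h2] at hA'det
    have h3 : (ContinuousLinearMap.id ℂ E).det = 1 := LinearMap.det_id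
    rw [h3] at hA'det
    norm_num at hA'det
  have hlocal : ∀ z₀ ∈ U, ∃ q : E → ℂ, (∀ᶠ v in 𝓝 (φ z₀), DifferentiableAt ℂ q v) ∧
      ∀ᶠ v in 𝓝 (φ z₀), ∃ z ∈ U, φ z = v ∧ g z = (l z + c) * q v := by
    intro z₀ hz₀
    by_cases h0 : l z₀ + c = 0
    · have hscale : ∀ w : E, ∃ t : ℂ, t ≠ 0 ∧ z₀ + t • w ∈ U := by
        intro w
        have hcw : Continuous fun t : ℂ => z₀ + t • w := by fun_prop
        have h1 : ∀ᶠ t in 𝓝[≠] (0 : ℂ), z₀ + t • w ∈ U :=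
          nhdsWithin_le_nhds (hcw.continuousAt.eventually (by simpa using hUopen.mem_nhds hz₀))
        obtain ⟨t, ht, ht0⟩ := (h1.and self_mem_nhdsWithin).exists
        exact ⟨t, ht0, ht⟩
      have hσz₀ : A z₀ + B = z₀ := by rw [← hσ]; exact hfix z₀ hz₀ h0
      have hσt : ∀ w, σ (z₀ + w) = z₀ + A w := by
        intro w
        rw [hσ, map_add, add_right_comm, hσz₀]
      have hlA : ∀ w, l (A w) = - l w := by
        intro w
        obtain ⟨t, ht, htU⟩ := hscale w
        have h1 := hJodd _ htU
        rw [hσt] at h1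
        simp only [map_add, map_smul, smul_eq_mul] at h1
        refine mul_left_cancel₀ ht ?_
        linear_combination h1 - 2 * h0
      have hker : ∀ w, l w = 0 → A w = w := by
        intro w hw
        obtain ⟨t, ht, htU⟩ := hscale w
        have h1 := hfix _ htU (by simp [hw, h0])
        rw [hσt] at h1
        have h2 := add_left_cancel h1
        rw [map_smul] at h2
        exact smul_right_injective E ht h2
      obtain ⟨e₀, he₀⟩ : ∃ e₀, l e₀ = 1 :=
        LinearMap.surjective (f := (l : E →ₗ[ℂ] ℂ)) (by exact_mod_cast hl) 1
      have hAA : ∀ w, A (A w) = w := by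
        intro w
        have h1 := hσinv (z₀ + w)
        rw [hσt, hσt] at h1
        exact add_left_cancel h1
      -- The component of `e₀` in the `-1` eigenspace of `A`.
      set e : E := (1 / 2 : ℂ) • (e₀ - A e₀)
      have he : l e = 1 := by
        simp only [e, map_smul, map_sub, hlA, he₀, smul_eq_mul]; norm_num
      have hAe : A e = -e := by
        simp only [e, map_smul, map_sub, hAA]; module
      have hrefl : ∀ z, σ z = z - (2 * (l z + c)) • e := by
        intro z
        have h1 := hker (z - z₀ - (l (z - z₀)) • e) (by simp [he])
        have h2 : l (z - z₀) = l z + c := by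
          rw [map_sub]; linear_combination -h0
        rw [h2, map_sub, map_smul, hAe] at h1
        have h3 := hσt (z - z₀)
        rw [add_sub_cancel] at h3
        rw [h3, eq_add_of_sub_eq h1]
        module
      exact exists_local_quotient_of_critical hUopen hφholo hg l c e z₀ he h0 hz₀ hJ
        (fun z hz => by rw [← hrefl]; exact hφσ z hz)
        (fun z hz => by rw [← hrefl]; exact hgodd z hz)
    · exact exists_local_quotient_of_regular hUopen hφholo hg l c z₀ h0 hz₀ hJ
  set R : Set E := φ '' {z ∈ U | l z + c ≠ 0} with hR
  -- The formula also holds at zeros of `l z + c`, where both sides are the junk value `0`.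
  have hF : ∃ F : E → ℂ, ∀ z ∈ U, F (φ z) = g z / (l z + c) := by
    refine ⟨fun v => if h : ∃ z ∈ U, φ z = v then g h.choose / (l h.choose + c) else 0, ?_⟩
    intro z hz
    have hex : ∃ y ∈ U, φ y = φ z := ⟨z, hz, rfl⟩
    simp only [dif_pos hex]
    rcases hfiber z hz _ hex.choose_spec.1 hex.choose_spec.2 with h | h
    · rw [h]
    · rw [h, hgodd z hz, hJodd z hz, neg_div_neg_eq]
  obtain ⟨F, hF⟩ := hF
  have hclosure : ∀ v ∈ V, v ∈ closure R := by
    intro v hv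
    rw [← hφsurj] at hv
    obtain ⟨z, hz, rfl⟩ := hv
    have h1 : z ∈ closure {z ∈ U | l z + c ≠ 0} :=
      (dense_affine_ne_zero hl c).open_subset_closure_inter hUopen hz
    exact mem_closure_image
      (hφholo.differentiableAt (hUopen.mem_nhds hz)).continuousAt h1
  have hglue : ∀ z₀ ∈ U, ∃ q : E → ℂ, DifferentiableAt ℂ q (φ z₀) ∧
      extendFrom R F =ᶠ[𝓝 (φ z₀)] q ∧ (φ z₀ ∈ R → q (φ z₀) = F (φ z₀)) := by
    intro z₀ hz₀
    obtain ⟨q, hq, hqz⟩ := hlocal z₀ hz₀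
    have hqF : ∀ᶠ v in 𝓝 (φ z₀), v ∈ R → q v = F v := by
      filter_upwards [hqz] with v hv hvR
      obtain ⟨z, hz, rfl, hgz⟩ := hv
      obtain ⟨y, ⟨hy, hy0⟩, hyz⟩ := hvR
      have hz0 : l z + c ≠ 0 := fun h => hy0 (by rwa [hone z hz h y hy hyz])
      rw [hF z hz, hgz, mul_div_cancel_left₀ _ hz0]
    refine ⟨q, hq.self_of_nhds, ?_, hqF.self_of_nhds⟩
    filter_upwards [hq, hqF.eventually_nhds, hVopen.mem_nhds (hφmaps hz₀)] with v hv hvF hvV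
    refine extendFrom_eq (hclosure v hvV) ?_
    refine (hv.continuousAt.tendsto.mono_left nhdsWithin_le_nhds).congr' ?_
    filter_upwards [nhdsWithin_le_nhds hvF, self_mem_nhdsWithin] with y hy hyR using hy hyR
  refine ⟨extendFrom R F, ?_, ?_⟩
  · intro v hv
    rw [← hφsurj] at hv
    obtain ⟨z, hz, rfl⟩ := hv
    obtain ⟨q, hq, hqe, -⟩ := hglue z hz
    exact (hq.congr_of_eventuallyEq hqe).differentiableWithinAt
  · intro z hz
    rw [hJ z hz]
    by_cases h0 : l z + c = 0
    · have h1 := hgodd z hz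
      rw [hfix z hz h0] at h1
      rw [h0, zero_mul]
      linear_combination h1 / 2
    · obtain ⟨q, -, hqe, hqF⟩ := hglue z hz
      rw [hqe.self_of_nhds, hqF ⟨z, ⟨hz, h0⟩, rfl⟩, hF z hz, mul_div_cancel₀ _ h0]

end SeveralVariables

/-- Under the hypotheses of the main theorem (σ affine-linear
involution with `J_σ = -1`, `φ : U → V` σ-invariant 2-proper with affine-linear
Jacobian), every holomorphic `g` on `U` with `g ∘ σ = -g` can be written as
`g = J_φ · (f ∘ φ)` for some `f` holomorphic on `V`. -/
theorem stmt_8 (d : ℕ) (hd : 1 ≤ d)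
    (σ : EuclideanSpace ℂ (Fin d) → EuclideanSpace ℂ (Fin d))
    (A : EuclideanSpace ℂ (Fin d) →ₗ[ℂ] EuclideanSpace ℂ (Fin d))
    (B : EuclideanSpace ℂ (Fin d))
    (hσ : ∀ z, σ z = A z + B)
    (hσinv : ∀ z, σ (σ z) = z)
    (hdetA : LinearMap.det A = -1)
    (U V : Set (EuclideanSpace ℂ (Fin d)))
    (hUopen : IsOpen U) (hUconn : IsConnected U)
    (hVopen : IsOpen V) (hVconn : IsConnected V)
    (hUinv : σ '' U ⊆ U)
    (φ : EuclideanSpace ℂ (Fin d) → EuclideanSpace ℂ (Fin d))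
    (hφholo : DifferentiableOn ℂ φ U)
    (hφmaps : Set.MapsTo φ U V)
    (hφsurj : φ '' U = V)
    (hφproper : ∀ K : Set (EuclideanSpace ℂ (Fin d)), K ⊆ V → IsCompact K →
      IsCompact {z ∈ U | φ z ∈ K})
    (hfib2 : ∀ v ∈ V \ (φ '' {z ∈ U | (fderiv ℂ φ z).det = 0}),
      Nat.card {z ∈ U | φ z = v} = 2)
    (hfib1 : ∀ v ∈ φ '' {z ∈ U | (fderiv ℂ φ z).det = 0},
      Nat.card {z ∈ U | φ z = v} = 1)
    (hφσ : ∀ z ∈ U, φ (σ z) = φ z)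
    (hJaff : ∃ (l : EuclideanSpace ℂ (Fin d) →ₗ[ℂ] ℂ) (c : ℂ),
      ∀ z ∈ U, (fderiv ℂ φ z).det = l z + c)
    (g : EuclideanSpace ℂ (Fin d) → ℂ)
    (hg : DifferentiableOn ℂ g U)
    (hgodd : ∀ z ∈ U, g (σ z) = - g z) :
    ∃ f : EuclideanSpace ℂ (Fin d) → ℂ,
      DifferentiableOn ℂ f V ∧ ∀ z ∈ U, g z = (fderiv ℂ φ z).det * f (φ z) := by
  exact exists_quotient_of_involution σ A B hσ hσinv hdetA U V hUopen hUconn.nonempty hVopen hUinv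
    φ hφholo hφmaps hφsurj hfib2 hfib1 hφσ hJaff g hg hgodd
end

section
/- Fix an integer d ≥ 2. Define κ : ℂ^d × ℂ^d → ℂ by κ(z, w) := (1/4)·exp(Σ_{j=1}^{d−1} z_j·conj(w_j)) · Σ_{n=0}^{∞} (z_d·conj(w_d))ⁿ / (2n+1)!. Then κ is a positive semidefinite kernel on ℂ^d. (This is the reproducing kernel of the space obtained by transferring the Segal–Bargmann space of ℂ^d under the map φ(z) = (z₁, …, z_{d−1}, z_d²).) -/
/-!
Call a function `K` on pairs of indices positive semidefinite when all its Hermitian sums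
`∑ i, ∑ j, c i * conj (c j) * K i j` are nonnegative complex numbers. The kernel is a finite product
of factors of the form `g (z k * conj (w k))`, where `g` is a power series with nonnegative
coefficients: the exponential series for each `k < d - 1`, and `∑ uⁿ / (2n+1)!` for the last
coordinate. Multiplying a positive semidefinite `K` by a single term `a (z k * conj (w k)) ^ m`
with `a ≥ 0` only rescales the Hermitian sum by `a` and replaces `c i` by `c i * (z i k) ^ m`, so
positivity survives; summing over `m` shows that multiplication by a whole factor preserves
positivity (`IsPSDFun.mul_series`). Starting from the rank-one function `K = 1` and multiplying in
the factors one at a time gives the theorem, without the general Schur product theorem.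
-/

open Complex

/-- The kernel obtained by transferring the Segal–Bargmann space of `ℂ^d` under
`φ(z) = (z₁, …, z_{d-1}, z_d²)`:
`κ(z,w) = (1/4)·exp(Σ_{j<d-1} z_j conj w_j) · Σ_n (z_d conj w_d)ⁿ/(2n+1)!`. -/
noncomputable def sbKernel (d : ℕ) (hd : 2 ≤ d) (z w : Fin d → ℂ) : ℂ :=
  (4⁻¹ : ℂ) *
    Complex.exp (∑ j : Fin d, if (j : ℕ) < d - 1 then z j * (starRingEnd ℂ) (w j) else 0) *
    ∑' n : ℕ, (z ⟨d - 1, by omega⟩ * (starRingEnd ℂ) (w ⟨d - 1, by omega⟩)) ^ n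
        / (Nat.factorial (2 * n + 1) : ℂ)

open scoped ComplexOrder

/-- Positive semidefiniteness of a complex-valued function of two indices. In the order on `ℂ`,
`0 ≤ s` says that `s` is real and nonnegative. -/
def IsPSDFun {n : ℕ} (K : Fin n → Fin n → ℂ) : Prop :=
  ∀ c : Fin n → ℂ, 0 ≤ ∑ i, ∑ j, c i * (starRingEnd ℂ) (c j) * K i j

lemma isPSDFun_one {n : ℕ} : IsPSDFun (fun _ _ : Fin n => (1 : ℂ)) := by
  intro c
  have h : ∑ i, ∑ j, c i * (starRingEnd ℂ) (c j) * 1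
      = (∑ i, c i) * (starRingEnd ℂ) (∑ i, c i) := by
    simp [map_sum, Finset.sum_mul_sum]
  rw [h]
  exact mul_star_self_nonneg _

/-- Multiplying by a power series with nonnegative coefficients in `f i * conj (f j)` preserves
positive semidefiniteness. -/
lemma IsPSDFun.mul_series {n : ℕ} {K : Fin n → Fin n → ℂ} (hK : IsPSDFun K) (f : Fin n → ℂ)
    (a : ℕ → ℂ) (ha : ∀ m, 0 ≤ a m) (G : ℂ → ℂ) (hG : ∀ u, HasSum (fun m => a m * u ^ m) (G u)) :
    IsPSDFun (fun i j => K i j * G (f i * (starRingEnd ℂ) (f j))) := by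
  intro c
  have hs : HasSum
      (fun m => ∑ i, ∑ j, c i * (starRingEnd ℂ) (c j) *
        (K i j * (a m * (f i * (starRingEnd ℂ) (f j)) ^ m)))
      (∑ i, ∑ j, c i * (starRingEnd ℂ) (c j) * (K i j * G (f i * (starRingEnd ℂ) (f j)))) :=
    hasSum_sum fun i _ => hasSum_sum fun j _ => ((hG _).mul_left _).mul_left _
  refine hs.nonneg fun m => ?_
  have h : ∑ i, ∑ j, c i * (starRingEnd ℂ) (c j) *
        (K i j * (a m * (f i * (starRingEnd ℂ) (f j)) ^ m))
      = a m * ∑ i, ∑ j, (c i * f i ^ m) * (starRingEnd ℂ) (c j * f j ^ m) * K i j := by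
    simp only [Finset.mul_sum, map_mul, map_pow]
    refine Finset.sum_congr rfl fun i _ => Finset.sum_congr rfl fun j _ => ?_
    ring
  rw [h]
  exact mul_nonneg (ha m) (hK _)

lemma hasSum_exp_series (u : ℂ) :
    HasSum (fun m : ℕ => ((Nat.factorial m : ℂ))⁻¹ * u ^ m) (Complex.exp u) := by
  have h := NormedSpace.expSeries_div_hasSum_exp (𝔸 := ℂ) u
  rw [← Complex.exp_eq_exp_ℂ] at h
  simpa [div_eq_inv_mul] using h

lemma hasSum_odd_series (u : ℂ) :
    HasSum (fun m : ℕ => ((Nat.factorial (2 * m + 1) : ℂ))⁻¹ * u ^ m)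
      (∑' m : ℕ, u ^ m / (Nat.factorial (2 * m + 1) : ℂ)) := by
  have h : Summable (fun m : ℕ => u ^ m / (Nat.factorial (2 * m + 1) : ℂ)) := by
    refine Summable.of_norm_bounded (Real.summable_pow_div_factorial ‖u‖) fun m => ?_
    rw [norm_div, norm_pow, Complex.norm_natCast]
    gcongr
    omega
  simpa [div_eq_inv_mul] using h.hasSum

lemma isPSDFun_exp_sum {n d : ℕ} (p : Fin n → Fin d → ℂ) (s : Finset (Fin d)) :
    IsPSDFun (fun i j => Complex.exp (∑ k ∈ s, p i k * (starRingEnd ℂ) (p j k))) := by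
  induction s using Finset.induction_on with
  | empty => simpa using isPSDFun_one
  | insert k s hk ih =>
    have h := ih.mul_series (fun i => p i k) (fun m => ((Nat.factorial m : ℂ))⁻¹)
      (fun m => by positivity) Complex.exp hasSum_exp_series
    simpa only [Finset.sum_insert hk, Complex.exp_add, mul_comm] using h

/-- the transferred Segal–Bargmann kernel is a positive
semidefinite kernel on `ℂ^d`. -/
theorem stmt_17 (d : ℕ) (hd : 2 ≤ d) :
    ∀ (n : ℕ) (p : Fin n → (Fin d → ℂ)) (c : Fin n → ℂ),
      (∑ i, ∑ j, c i * (starRingEnd ℂ) (c j) * sbKernel d hd (p i) (p j)).im = 0 ∧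
      0 ≤ (∑ i, ∑ j, c i * (starRingEnd ℂ) (c j) * sbKernel d hd (p i) (p j)).re := by
  intro n p c
  have h := ((isPSDFun_exp_sum p (Finset.univ.filter fun k : Fin d => (k : ℕ) < d - 1)).mul_series
    (fun i => p i ⟨d - 1, by omega⟩) (fun m => ((Nat.factorial (2 * m + 1) : ℂ))⁻¹)
    (fun m => by positivity) _ hasSum_odd_series) c
  have h4 : (0 : ℂ) ≤ 4⁻¹ := by positivity
  have key : 0 ≤ ∑ i, ∑ j, c i * (starRingEnd ℂ) (c j) * sbKernel d hd (p i) (p j) := by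
    refine (mul_nonneg h4 h).trans_eq ?_
    simp only [Finset.mul_sum, sbKernel, Finset.sum_filter]
    refine Finset.sum_congr rfl fun i _ => Finset.sum_congr rfl fun j _ => ?_
    ring
  rw [Complex.nonneg_iff] at key
  exact ⟨key.2.symm, key.1⟩
end
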